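/- Let 1 → A → U →^j G → 1 be a definable extension of definable groups. Then there is a definable section s : G → U, i.e., a definable map with j(s(g)) = g for all g ∈ G. -/

import Mathlib

open Filter Set Topology

universe u

section OMinPreamble

variable {N : Type u}

section Basic
variable [LinearOrder N]

/-- A finite union of singletons and open intervals (with possibly infinite endpoints). -/
def IsFinUnionPtsIntervals (A : Set N) : Prop :=
  ∃ (k : ℕ) (f : Fin k → Set N),
    (∀ i, (∃ a, f i = {a}) ∨ (∃ a b, f i = Set.Ioo a b) ∨ (∃ a, f i = Set.Ioi a) ∨
        (∃ b, f i = Set.Iio b) ∨ f i = Set.univ) ∧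
    A = ⋃ i, f i

/-- An o-minimal structure on the ordered set `N`: an assignment, to each arity `m`,
of a collection of "definable" subsets of `N^m`, closed under the boolean and
first-order operations, containing the order and all points (parameters), and such
that every definable subset of `N` is a finite union of points and open intervals. -/
structure Struc (N : Type u) [LinearOrder N] where
  Def : ∀ m : ℕ, Set (Fin m → N) → Prop
  def_inter : ∀ {m : ℕ} {A B : Set (Fin m → N)}, Def m A → Def m B → Def m (A ∩ B)
  def_compl : ∀ {m : ℕ} {A : Set (Fin m → N)}, Def m A → Def m Aᶜ
  def_univ : ∀ m : ℕ, Def m Set.univ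
  def_reindex : ∀ {m k : ℕ} (g : Fin m → Fin k) {A : Set (Fin m → N)},
      Def m A → Def k {x | x ∘ g ∈ A}
  def_proj : ∀ {m : ℕ} {A : Set (Fin (m + 1) → N)},
      Def (m + 1) A → Def m {x | ∃ t : N, Fin.snoc x t ∈ A}
  def_lt : Def 2 {x | x 0 < x 1}
  def_pt : ∀ a : N, Def 1 {x | x 0 = a}
  o_min : ∀ {A : Set (Fin 1 → N)}, Def 1 A →
      IsFinUnionPtsIntervals {t : N | (fun _ : Fin 1 => t) ∈ A}

/-- Index of the pair `(i,j)` in `Fin (n*m)`. -/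
def finIdx {n m : ℕ} (i : Fin n) (j : Fin m) : Fin (n * m) :=
  ⟨i.1 * m + j.1, by
    have hi := i.isLt
    have hj := j.isLt
    calc i.1 * m + j.1 < i.1 * m + m := by omega
      _ = (i.1 + 1) * m := by ring
      _ ≤ n * m := Nat.mul_le_mul hi (le_refl m)⟩

def pFst {a b : ℕ} (p : Fin (a * b)) : Fin a :=
  ⟨p.1 / b, by
    have h := p.isLt
    have hb : 0 < b := by
      rcases Nat.eq_zero_or_pos b with h0 | h0
      · subst h0; simp at h
      · exact h0
    exact (Nat.div_lt_iff_lt_mul hb).mpr h⟩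

def pSnd {a b : ℕ} (p : Fin (a * b)) : Fin b :=
  ⟨p.1 % b, by
    have h := p.isLt
    have hb : 0 < b := by
      rcases Nat.eq_zero_or_pos b with h0 | h0
      · subst h0; simp at h
      · exact h0
    exact Nat.mod_lt _ hb⟩

/-- Horner evaluation of the polynomial with coefficients `c` (constant term first)
at `x`, relative to abstract operations. -/
def polyEval {α : Type*} (add mul : α → α → α) (zero : α) {n : ℕ} (c : Fin n → α)
    (x : α) : α :=
  (List.ofFn c).foldr (fun a acc => add a (mul x acc)) zero

/-- `n`-th power relative to an abstract operation with identity `z`. -/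
def opPow {α : Type*} (op : α → α → α) (z : α) (a : α) : ℕ → α
  | 0 => z
  | n + 1 => op a (opPow op z a n)

namespace Struc
variable (S : Struc N)

/-- The function `f`, restricted to the definable set `A ⊆ N^m` and with values in
`N^n`, is definable: its graph is a definable set. -/
def DefFunOn {m n : ℕ} (A : Set (Fin m → N)) (f : (Fin m → N) → (Fin n → N)) : Prop :=
  S.Def (m + n) {z | (z ∘ Fin.castAdd n) ∈ A ∧ f (z ∘ Fin.castAdd n) = z ∘ Fin.natAdd m}

/-- A definable function of two tuple variables. -/
def DefFun2 {m n k : ℕ} (A : Set (Fin m → N)) (B : Set (Fin n → N))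
    (f : (Fin m → N) → (Fin n → N) → (Fin k → N)) : Prop :=
  S.Def (m + n + k) {z |
    (z ∘ Fin.castAdd k ∘ Fin.castAdd n) ∈ A ∧
    (z ∘ Fin.castAdd k ∘ Fin.natAdd m) ∈ B ∧
    f (z ∘ Fin.castAdd k ∘ Fin.castAdd n) (z ∘ Fin.castAdd k ∘ Fin.natAdd m) =
      z ∘ Fin.natAdd (m + n)}

/-- A definable unary function `N → N` on the set `J ⊆ N`. -/
def DefFun1 (J : Set N) (f : N → N) : Prop :=
  S.Def 2 {z | z 0 ∈ J ∧ f (z 0) = z 1}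

/-- A definable curve in `N^k` defined on the set `J ⊆ N`. -/
def DefCurve {k : ℕ} (J : Set N) (σ : N → (Fin k → N)) : Prop :=
  S.DefFunOn {x : Fin 1 → N | x 0 ∈ J} (fun x => σ (x 0))

/-- A definable function of `n` tuple variables from `A^n ⊆ (N^m)^n` to `N^k`. -/
def DefFunN {m k : ℕ} (n : ℕ) (A : Set (Fin m → N))
    (c : (Fin n → (Fin m → N)) → (Fin k → N)) : Prop :=
  S.Def (n * m + k) {z |
    (∀ i : Fin n, (fun j : Fin m => z (Fin.castAdd k (finIdx i j))) ∈ A) ∧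
    c (fun i j => z (Fin.castAdd k (finIdx i j))) = fun j => z (Fin.natAdd (n * m) j)}

end Struc

/-- The filter of neighbourhoods of the "left end" of the set `J ⊆ N`. -/
def leftEndFilter (J : Set N) : Filter N := ⨅ x ∈ J, Filter.principal (J ∩ Set.Iio x)

/-- The filter of neighbourhoods of the "right end" of the set `J ⊆ N`
(for `J` unbounded above this is "`→ +∞` inside `J`"). -/
def rightEndFilter (J : Set N) : Filter N := ⨅ x ∈ J, Filter.principal (J ∩ Set.Ioi x)

/-- `J` is an open interval, with possibly infinite endpoints. -/
def IsOpenIntervalSet (J : Set N) : Prop :=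
  (∃ a b, a < b ∧ J = Set.Ioo a b) ∨ (∃ a, J = Set.Ioi a) ∨ (∃ b, J = Set.Iio b) ∨
    J = Set.univ

end Basic

section Groups
variable [LinearOrder N] [TopologicalSpace N]

/-- The o-minimal dimension of `A ⊆ N^m`: the largest `k` such that the image of `A`
under some projection onto `k` coordinates has nonempty interior in `N^k`
(`N` carrying the order topology and `N^k` the product topology). -/
noncomputable def odim {m : ℕ} (A : Set (Fin m → N)) : ℕ :=
  sSup {k | ∃ p : Fin k → Fin m, Function.Injective p ∧
    (interior ((fun x : Fin m → N => x ∘ p) '' A)).Nonempty}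

/-- A definable group: a definable subset of `N^m` with a group operation whose graph
is definable, together with its (unique) definable manifold topology, i.e. a group
topology which agrees with the ambient topology on a large definable subset. -/
structure DefGroup (S : Struc N) (m : ℕ) where
  carrier : Set (Fin m → N)
  carrier_def : S.Def m carrier
  mul : (Fin m → N) → (Fin m → N) → (Fin m → N)
  one : Fin m → N
  inv : (Fin m → N) → (Fin m → N)
  one_mem : one ∈ carrier
  mul_mem : ∀ ⦃x y : Fin m → N⦄, x ∈ carrier → y ∈ carrier → mul x y ∈ carrier
  inv_mem : ∀ ⦃x : Fin m → N⦄, x ∈ carrier → inv x ∈ carrier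
  mul_assoc' : ∀ ⦃x y z : Fin m → N⦄, x ∈ carrier → y ∈ carrier → z ∈ carrier →
      mul (mul x y) z = mul x (mul y z)
  one_mul' : ∀ ⦃x : Fin m → N⦄, x ∈ carrier → mul one x = x
  inv_mul' : ∀ ⦃x : Fin m → N⦄, x ∈ carrier → mul (inv x) x = one
  mul_graph_def : S.DefFun2 carrier carrier mul
  inv_graph_def : S.DefFunOn carrier inv
  top : TopologicalSpace (Fin m → N)
  contMul : @ContinuousOn ((Fin m → N) × (Fin m → N)) (Fin m → N)
      (@instTopologicalSpaceProd _ _ top top) top (fun p => mul p.1 p.2)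
      (carrier ×ˢ carrier)
  contInv : @ContinuousOn (Fin m → N) (Fin m → N) top top inv carrier
  pillay : ∃ V : Set (Fin m → N), V ⊆ carrier ∧ S.Def m V ∧
      (carrier \ V = ∅ ∨ odim (carrier \ V) < odim carrier) ∧
      (∃ O : Set (Fin m → N), IsOpen[top] O ∧ O ∩ carrier = V) ∧
      ∀ x ∈ V, @nhdsWithin (Fin m → N) top x carrier = nhdsWithin x V

variable {S : Struc N}

/-- The elements of a definable group, as a type. -/
def DefGroup.Elt {m : ℕ} (G : DefGroup S m) : Type u := {x : Fin m → N // x ∈ G.carrier}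

namespace DefGroup

instance {m : ℕ} {G : DefGroup S m} : Mul G.Elt :=
  ⟨fun a b => ⟨G.mul a.1 b.1, G.mul_mem a.2 b.2⟩⟩

instance {m : ℕ} {G : DefGroup S m} : One G.Elt := ⟨⟨G.one, G.one_mem⟩⟩

instance {m : ℕ} {G : DefGroup S m} : Inv G.Elt := ⟨fun a => ⟨G.inv a.1, G.inv_mem a.2⟩⟩

instance instGroupElt {m : ℕ} {G : DefGroup S m} : Group G.Elt :=
  Group.ofLeftAxioms
    (fun a b c => Subtype.ext (G.mul_assoc' a.2 b.2 c.2))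
    (fun a => Subtype.ext (G.one_mul' a.2))
    (fun a => Subtype.ext (G.inv_mul' a.2))

variable {m : ℕ} (G : DefGroup S m)

/-- `H` is a definable subgroup of `G`. -/
def IsDefSubgroup (H : Set (Fin m → N)) : Prop :=
  H ⊆ G.carrier ∧ S.Def m H ∧ G.one ∈ H ∧
    (∀ x ∈ H, ∀ y ∈ H, G.mul x y ∈ H) ∧ (∀ x ∈ H, G.inv x ∈ H)

/-- `H` is a definable normal subgroup of `G`. -/
def IsNormalDefSubgroup (H : Set (Fin m → N)) : Prop :=
  G.IsDefSubgroup H ∧ ∀ g ∈ G.carrier, ∀ h ∈ H, G.mul (G.mul g h) (G.inv g) ∈ H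

/-- The left coset `g·H`. -/
def lcoset (g : Fin m → N) (H : Set (Fin m → N)) : Set (Fin m → N) :=
  {y | ∃ h ∈ H, y = G.mul g h}

/-- `H` has finite index in `G`: finitely many left cosets cover `G`. -/
def FiniteIndex (H : Set (Fin m → N)) : Prop :=
  ∃ F : Finset (Fin m → N), ↑F ⊆ G.carrier ∧ G.carrier ⊆ ⋃ g ∈ F, G.lcoset g H

/-- `G` is definably connected: it has no proper definable subgroup of finite index. -/
def DefinablyConnected : Prop :=
  ∀ H : Set (Fin m → N), G.IsDefSubgroup H → G.FiniteIndex H → H = G.carrier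

def IsAbelian : Prop := ∀ x ∈ G.carrier, ∀ y ∈ G.carrier, G.mul x y = G.mul y x

/-- The center of `G`, as a definable subset. -/
def center : Set (Fin m → N) :=
  {x | x ∈ G.carrier ∧ ∀ y ∈ G.carrier, G.mul x y = G.mul y x}

def TorsionFree : Prop := ∀ x : G.Elt, x ≠ 1 → ∀ n : ℕ, 0 < n → x ^ n ≠ 1

/-- `G` is definably compact: every definable continuous embedding of an open
interval into `G` has limits at both ends of the interval (with respect to the
group's definable manifold topology). -/
def DefinablyCompact : Prop :=
  ∀ J : Set N, IsOpenIntervalSet J → ∀ σ : N → (Fin m → N),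
    S.DefCurve J σ → (∀ t ∈ J, σ t ∈ G.carrier) → Set.InjOn σ J →
    @ContinuousOn N (Fin m → N) _ G.top σ J →
    (∃ c ∈ G.carrier, Filter.Tendsto σ (leftEndFilter J) (@nhds _ G.top c)) ∧
    (∃ d ∈ G.carrier, Filter.Tendsto σ (rightEndFilter J) (@nhds _ G.top d))

/-- `G` is definably semisimple: it has no infinite proper abelian definable normal
subgroup. -/
def DefinablySemisimple : Prop :=
  ¬ ∃ H : Set (Fin m → N), G.IsNormalDefSubgroup H ∧ H.Infinite ∧ H ≠ G.carrier ∧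
      ∀ x ∈ H, ∀ y ∈ H, G.mul x y = G.mul y x

/-- The product of a list of elements of `G`. -/
def listProd : List (Fin m → N) → (Fin m → N)
  | [] => G.one
  | x :: xs => G.mul x (listProd xs)

end DefGroup

/-- A definable homomorphism between definable groups. -/
def IsDefHom {m n : ℕ} (G : DefGroup S m) (H : DefGroup S n)
    (f : (Fin m → N) → (Fin n → N)) : Prop :=
  (∀ x ∈ G.carrier, f x ∈ H.carrier) ∧ S.DefFunOn G.carrier f ∧
  ∀ x ∈ G.carrier, ∀ y ∈ G.carrier, f (G.mul x y) = H.mul (f x) (f y)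

/-- `π` realizes `Q` as the quotient of the subgroup `H` of `U` by the normal
subgroup `V ⊆ H`: a definable surjective homomorphism `H → Q` with fibers the
cosets of `V` (kernel exactly `V`). -/
def IsQuotMap {m k : ℕ} (U : DefGroup S m) (H V : Set (Fin m → N)) (Q : DefGroup S k)
    (π : (Fin m → N) → (Fin k → N)) : Prop :=
  (∀ x ∈ H, π x ∈ Q.carrier) ∧ S.DefFunOn H π ∧
  (∀ x ∈ H, ∀ y ∈ H, π (U.mul x y) = Q.mul (π x) (π y)) ∧
  π '' H = Q.carrier ∧ ∀ x ∈ H, (π x = Q.one ↔ x ∈ V)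

/-- A definable extension `1 → A → U → G → 1`. -/
def IsDefExtension {mA mU mG : ℕ} (A : DefGroup S mA) (U : DefGroup S mU)
    (G : DefGroup S mG) (i : (Fin mA → N) → (Fin mU → N))
    (j : (Fin mU → N) → (Fin mG → N)) : Prop :=
  IsDefHom A U i ∧ IsDefHom U G j ∧ Set.InjOn i A.carrier ∧
  j '' U.carrier = G.carrier ∧
  ∀ u ∈ U.carrier, (j u = G.one ↔ ∃ a ∈ A.carrier, u = i a)

/-- A definable `G`-module: a definable abelian group `A` together with a definable
action of `G` on `A` by (definable) automorphisms. -/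
structure DefModule {mG mA : ℕ} (G : DefGroup S mG) (A : DefGroup S mA) where
  abelian : A.IsAbelian
  act : (Fin mG → N) → (Fin mA → N) → (Fin mA → N)
  act_mem : ∀ ⦃x a⦄, x ∈ G.carrier → a ∈ A.carrier → act x a ∈ A.carrier
  act_one : ∀ ⦃a⦄, a ∈ A.carrier → act G.one a = a
  act_mul : ∀ ⦃x y⦄, x ∈ G.carrier → y ∈ G.carrier → ∀ ⦃a⦄, a ∈ A.carrier →
      act (G.mul x y) a = act x (act y a)
  act_hom : ∀ ⦃x⦄, x ∈ G.carrier → ∀ ⦃a b⦄, a ∈ A.carrier → b ∈ A.carrier →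
      act x (A.mul a b) = A.mul (act x a) (act x b)
  act_def : S.DefFun2 G.carrier A.carrier act

/-- The module `(A, γ)` is trivial. -/
def DefModule.IsTrivial {mG mA : ℕ} {G : DefGroup S mG} {A : DefGroup S mA}
    (γ : DefModule G A) : Prop :=
  ∀ x ∈ G.carrier, ∀ a ∈ A.carrier, γ.act x a = a

/-- The definable extension `1 → A → U → G → 1` is compatible with the `G`-module
`(A, γ)`: conjugation in `U` induces the action `γ` on `A`. -/
def ExtCompatible {mG mA mU : ℕ} {G : DefGroup S mG} {A : DefGroup S mA}
    (γ : DefModule G A) (U : DefGroup S mU) (i : (Fin mA → N) → (Fin mU → N))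
    (j : (Fin mU → N) → (Fin mG → N)) : Prop :=
  ∀ u ∈ U.carrier, ∀ a ∈ A.carrier, i (γ.act (j u) a) = U.mul (U.mul u (i a)) (U.inv u)

/-- Alternating "sum" `x₁ - (x₂ - (x₃ - ⋯))` in a (multiplicatively written abelian)
definable group. -/
def altSum {k : ℕ} (A : DefGroup S k) : List (Fin k → N) → (Fin k → N)
  | [] => A.one
  | x :: xs => A.mul x (A.inv (altSum A xs))

/-- The `i`-th term (`1 ≤ i ≤ n+1`) in the coboundary formula:
`c(g₁,…,g_i g_{i+1},…,g_{n+1})` for `1 ≤ i ≤ n`, and `c(g₁,…,g_n)` for `i = n+1`. -/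
def cobTerm {mG kA : ℕ} (G : DefGroup S mG) {n : ℕ}
    (c : (Fin n → (Fin mG → N)) → (Fin kA → N))
    (g : Fin (n + 1) → (Fin mG → N)) (i : ℕ) : Fin kA → N :=
  if i ≤ n then
    c (fun j : Fin n =>
      if j.1 + 1 < i then g (Fin.castSucc j)
      else if j.1 + 1 = i then G.mul (g (Fin.castSucc j)) (g j.succ)
      else g j.succ)
  else c (fun j : Fin n => g (Fin.castSucc j))

/-- The coboundary `δb` of the definable `n`-cochain `b`:
`δb(g₁,…,g_{n+1}) = γ(g₁)(b(g₂,…,g_{n+1})) + Σ_{i=1}^{n} (−1)^i b(…,g_i g_{i+1},…)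
+ (−1)^{n+1} b(g₁,…,g_n)` (written multiplicatively in the abelian group `A`). -/
def cob {mG kA : ℕ} {G : DefGroup S mG} {A : DefGroup S kA} (γ : DefModule G A)
    {n : ℕ} (b : (Fin n → (Fin mG → N)) → (Fin kA → N))
    (g : Fin (n + 1) → (Fin mG → N)) : Fin kA → N :=
  A.mul (γ.act (g 0) (b (Fin.tail g)))
    (A.inv (altSum A (List.ofFn fun i : Fin (n + 1) => cobTerm G b g (i.1 + 1))))

/-- There is no definable bijection between `X ⊆ N^m` and `Y ⊆ N^k`. -/
def NoDefBijection (S : Struc N) {m k : ℕ} (X : Set (Fin m → N))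
    (Y : Set (Fin k → N)) : Prop :=
  ¬ ∃ f : (Fin m → N) → (Fin k → N), S.DefFunOn X f ∧ (∀ x ∈ X, f x ∈ Y) ∧
      Set.InjOn f X ∧ f '' X = Y

/-- The subgroup `W` of `U` is definably isomorphic to a (finite) direct product of
copies of the one-dimensional group `(J, op)`. -/
def IsProdOfCopies {m : ℕ} (U : DefGroup S m) (W : Set (Fin m → N)) (J : Set N)
    (op : N → N → N) : Prop :=
  ∃ (d : ℕ) (φ : (Fin m → N) → (Fin d → N)),
    S.DefFunOn W φ ∧ Set.InjOn φ W ∧ φ '' W = {z | ∀ i, z i ∈ J} ∧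
    ∀ x ∈ W, ∀ y ∈ W, φ (U.mul x y) = fun i => op (φ x i) (φ y i)

/-- `V` is the internal direct product of the list `parts` of definable subgroups
of `U`: the parts commute pairwise and every element of `V` is uniquely a product
of elements of the parts. -/
def IsInternalDPList {m : ℕ} (U : DefGroup S m) (V : Set (Fin m → N))
    (parts : List (Set (Fin m → N))) : Prop :=
  (∀ P ∈ parts, U.IsDefSubgroup P) ∧
  List.Pairwise (fun P Q => ∀ x ∈ P, ∀ y ∈ Q, U.mul x y = U.mul y x) parts ∧
  (∀ v, v ∈ V ↔ ∃ f : Fin parts.length → (Fin m → N),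
      (∀ i, f i ∈ parts.get i) ∧ v = U.listProd (List.ofFn f)) ∧
  ∀ f g : Fin parts.length → (Fin m → N),
    (∀ i, f i ∈ parts.get i) → (∀ i, g i ∈ parts.get i) →
    U.listProd (List.ofFn f) = U.listProd (List.ofFn g) → f = g

/-- `K` is a definable subgroup of `U`, equipped with its group structure and with
the submanifold topology inherited from `U`. -/
def IsDefSubgroupGrp {m : ℕ} (U K : DefGroup S m) : Prop :=
  K.carrier ⊆ U.carrier ∧ K.one = U.one ∧
  (∀ x ∈ K.carrier, ∀ y ∈ K.carrier, K.mul x y = U.mul x y) ∧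
  (∀ x ∈ K.carrier, K.inv x = U.inv x) ∧
  ∀ x ∈ K.carrier, @nhdsWithin (Fin m → N) K.top x K.carrier
      = @nhdsWithin (Fin m → N) U.top x K.carrier

/-- The abelian definable group `U` has no definably compact parts: there is a chain
of definable subgroups each of whose successive quotients is a one-dimensional
definably connected torsion-free definable group. -/
def NoCompactParts {m : ℕ} (U : DefGroup S m) : Prop :=
  ∃ (n : ℕ) (ch : Fin (n + 1) → Set (Fin m → N)),
    ch 0 = {U.one} ∧ ch (Fin.last n) = U.carrier ∧
    (∀ j, U.IsDefSubgroup (ch j)) ∧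
    (∀ j : Fin n, ch j.castSucc ⊆ ch j.succ) ∧
    ∀ j : Fin n, ∃ (k : ℕ) (Q : DefGroup S k) (π : (Fin m → N) → (Fin k → N)),
      IsQuotMap U (ch j.succ) (ch j.castSucc) Q π ∧
      odim Q.carrier = 1 ∧ Q.DefinablyConnected ∧ Q.TorsionFree

/-- `H` is the definably connected component of the identity of `G`: the smallest
definable subgroup of finite index. -/
def IsIdentityComponent {m : ℕ} (G : DefGroup S m) (H : Set (Fin m → N)) : Prop :=
  G.IsDefSubgroup H ∧ G.FiniteIndex H ∧
    ∀ H' : Set (Fin m → N), G.IsDefSubgroup H' → G.FiniteIndex H' → H ⊆ H'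

/-- A definable (not necessarily unital or associative) ring: a definable abelian
group together with a definable bi-additive multiplication. -/
structure DefRing (S : Struc N) (m : ℕ) where
  grp : DefGroup S m
  comm : grp.IsAbelian
  rmul : (Fin m → N) → (Fin m → N) → (Fin m → N)
  rmul_mem : ∀ ⦃x y⦄, x ∈ grp.carrier → y ∈ grp.carrier → rmul x y ∈ grp.carrier
  left_distrib' : ∀ ⦃x y z⦄, x ∈ grp.carrier → y ∈ grp.carrier → z ∈ grp.carrier →
      rmul x (grp.mul y z) = grp.mul (rmul x y) (rmul x z)
  right_distrib' : ∀ ⦃x y z⦄, x ∈ grp.carrier → y ∈ grp.carrier → z ∈ grp.carrier →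
      rmul (grp.mul x y) z = grp.mul (rmul x z) (rmul y z)
  rmul_graph_def : S.DefFun2 grp.carrier grp.carrier rmul

/-- `H` is a definable left ideal of the definable ring `R`. -/
def DefRing.IsLeftIdeal {m : ℕ} (R : DefRing S m) (H : Set (Fin m → N)) : Prop :=
  R.grp.IsDefSubgroup H ∧ ∀ u ∈ R.grp.carrier, ∀ h ∈ H, R.rmul u h ∈ H

/-- `π` realizes `Q` as the quotient ring of `R` by the (two-sided) ideal `V`. -/
def IsRingQuotMap {m k : ℕ} (R : DefRing S m) (V : Set (Fin m → N)) (Q : DefRing S k)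
    (π : (Fin m → N) → (Fin k → N)) : Prop :=
  IsQuotMap R.grp R.grp.carrier V Q.grp π ∧
  ∀ x ∈ R.grp.carrier, ∀ y ∈ R.grp.carrier, π (R.rmul x y) = Q.rmul (π x) (π y)

/-- The two-sided annihilator of the definable ring `R`. -/
def ringAnn {m : ℕ} (R : DefRing S m) : Set (Fin m → N) :=
  {v | v ∈ R.grp.carrier ∧
    ∀ w ∈ R.grp.carrier, R.rmul v w = R.grp.one ∧ R.rmul w v = R.grp.one}

/-- Iterated ring product `((a·x₁)·x₂)⋯`. -/
def rFold {m : ℕ} (R : DefRing S m) : (Fin m → N) → List (Fin m → N) → (Fin m → N)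
  | a, [] => a
  | a, x :: xs => rFold R (R.rmul a x) xs

/-- An o-minimal expansion of an ordered group, definable in the ambient structure:
a definable subset `J ⊆ N` with a definable ordered abelian group structure
(the induced structure on `J` being the relevant o-minimal expansion). -/
structure OMinGrpExp (S : Struc N) where
  J : Set N
  Jdef : S.Def 1 {x | x 0 ∈ J}
  add : N → N → N
  zero : N
  neg : N → N
  zero_mem : zero ∈ J
  add_mem : ∀ ⦃a b⦄, a ∈ J → b ∈ J → add a b ∈ J
  neg_mem : ∀ ⦃a⦄, a ∈ J → neg a ∈ J
  add_assoc' : ∀ ⦃a b c⦄, a ∈ J → b ∈ J → c ∈ J → add (add a b) c = add a (add b c)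
  add_comm' : ∀ ⦃a b⦄, a ∈ J → b ∈ J → add a b = add b a
  zero_add' : ∀ ⦃a⦄, a ∈ J → add zero a = a
  neg_add' : ∀ ⦃a⦄, a ∈ J → add (neg a) a = zero
  add_lt' : ∀ ⦃a b c⦄, a ∈ J → b ∈ J → c ∈ J → b < c → add a b < add a c
  add_graph_def : S.Def 3 {z | z 0 ∈ J ∧ z 1 ∈ J ∧ add (z 0) (z 1) = z 2}

namespace OMinGrpExp
variable {S : Struc N} (E : OMinGrpExp S)

/-- A subset of `J^k` bounded in `J`. -/
def BoundedSet {k : ℕ} (B : Set (Fin k → N)) : Prop :=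
  ∃ lo ∈ E.J, ∃ hi ∈ E.J, ∀ x ∈ B, ∀ i, lo ≤ x i ∧ x i ≤ hi

/-- The induced structure on `J` is semi-bounded: every definable subset of `J^k`
belongs to every family of sets (closed under the first-order operations relative
to `J`) containing the ordered group structure, all bounded definable sets, and
all definable endomorphisms of `(J, 0, +)`. -/
def SemiBounded : Prop :=
  ∀ (D : ∀ k : ℕ, Set (Fin k → N) → Prop),
    (∀ {k : ℕ} {A B : Set (Fin k → N)}, D k A → D k B → D k (A ∩ B)) →
    (∀ {k : ℕ} {A : Set (Fin k → N)}, D k A → D k ({x | ∀ i, x i ∈ E.J} \ A)) →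
    (∀ k : ℕ, D k {x | ∀ i, x i ∈ E.J}) →
    (∀ {k l : ℕ} (g : Fin k → Fin l) {A : Set (Fin k → N)}, D k A →
        D l {x | (∀ i, x i ∈ E.J) ∧ x ∘ g ∈ A}) →
    (∀ {k : ℕ} {A : Set (Fin (k + 1) → N)}, D (k + 1) A →
        D k {x | (∀ i, x i ∈ E.J) ∧ ∃ t ∈ E.J, Fin.snoc x t ∈ A}) →
    (D 2 {x | (∀ i, x i ∈ E.J) ∧ x 0 < x 1}) →
    (∀ a ∈ E.J, D 1 {x | x 0 = a}) →
    (D 3 {z | (∀ i, z i ∈ E.J) ∧ E.add (z 0) (z 1) = z 2}) →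
    (∀ {k : ℕ} {B : Set (Fin k → N)}, S.Def k B → (∀ x ∈ B, ∀ i, x i ∈ E.J) →
        E.BoundedSet B → D k B) →
    (∀ f : N → N, S.DefFun1 E.J f → (∀ a ∈ E.J, f a ∈ E.J) →
        (∀ ⦃a b⦄, a ∈ E.J → b ∈ E.J → f (E.add a b) = E.add (f a) (f b)) →
        D 2 {z | z 0 ∈ E.J ∧ z 1 ∈ E.J ∧ f (z 0) = z 1}) →
    ∀ {k : ℕ} {A : Set (Fin k → N)}, S.Def k A → (∀ x ∈ A, ∀ i, x i ∈ E.J) → D k A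

end OMinGrpExp

/-- An o-minimal expansion of a real closed field, definable in the ambient
structure: a definable subset `J ⊆ N` with a definable real closed ordered field
structure. -/
structure OMinFieldExp (S : Struc N) where
  J : Set N
  Jdef : S.Def 1 {x | x 0 ∈ J}
  add : N → N → N
  mul : N → N → N
  zero : N
  one : N
  neg : N → N
  inv : N → N
  zero_mem : zero ∈ J
  one_mem : one ∈ J
  zero_ne_one : zero ≠ one
  add_mem : ∀ ⦃a b⦄, a ∈ J → b ∈ J → add a b ∈ J
  mul_mem : ∀ ⦃a b⦄, a ∈ J → b ∈ J → mul a b ∈ J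
  neg_mem : ∀ ⦃a⦄, a ∈ J → neg a ∈ J
  inv_mem : ∀ ⦃a⦄, a ∈ J → inv a ∈ J
  add_assoc' : ∀ ⦃a b c⦄, a ∈ J → b ∈ J → c ∈ J → add (add a b) c = add a (add b c)
  add_comm' : ∀ ⦃a b⦄, a ∈ J → b ∈ J → add a b = add b a
  zero_add' : ∀ ⦃a⦄, a ∈ J → add zero a = a
  neg_add' : ∀ ⦃a⦄, a ∈ J → add (neg a) a = zero
  mul_assoc' : ∀ ⦃a b c⦄, a ∈ J → b ∈ J → c ∈ J → mul (mul a b) c = mul a (mul b c)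
  mul_comm' : ∀ ⦃a b⦄, a ∈ J → b ∈ J → mul a b = mul b a
  one_mul' : ∀ ⦃a⦄, a ∈ J → mul one a = a
  mul_inv' : ∀ ⦃a⦄, a ∈ J → a ≠ zero → mul (inv a) a = one
  distrib' : ∀ ⦃a b c⦄, a ∈ J → b ∈ J → c ∈ J →
      mul a (add b c) = add (mul a b) (mul a c)
  add_lt' : ∀ ⦃a b c⦄, a ∈ J → b ∈ J → c ∈ J → b < c → add a b < add a c
  mul_pos' : ∀ ⦃a b⦄, a ∈ J → b ∈ J → zero < a → zero < b → zero < mul a b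
  sq_root : ∀ ⦃a⦄, a ∈ J → zero ≤ a → ∃ b ∈ J, mul b b = a
  odd_root : ∀ n : ℕ, Odd n → ∀ c : Fin (n + 1) → N, (∀ i, c i ∈ J) →
      c (Fin.last n) ≠ zero → ∃ x ∈ J, polyEval add mul zero c x = zero
  add_graph_def : S.Def 3 {z | z 0 ∈ J ∧ z 1 ∈ J ∧ add (z 0) (z 1) = z 2}
  mul_graph_def : S.Def 3 {z | z 0 ∈ J ∧ z 1 ∈ J ∧ mul (z 0) (z 1) = z 2}

/-- The linearly bounded one-dimensional torsion-free definable group of an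
o-minimal expansion of a real closed field: a definable ordered torsion-free group
structure on `J` with respect to which the induced structure is linearly bounded. -/
structure LinBddGrp {S : Struc N} (E : OMinFieldExp S) where
  op : N → N → N
  z : N
  opneg : N → N
  z_mem : z ∈ E.J
  op_mem : ∀ ⦃a b⦄, a ∈ E.J → b ∈ E.J → op a b ∈ E.J
  opneg_mem : ∀ ⦃a⦄, a ∈ E.J → opneg a ∈ E.J
  op_assoc : ∀ ⦃a b c⦄, a ∈ E.J → b ∈ E.J → c ∈ E.J → op (op a b) c = op a (op b c)
  op_comm : ∀ ⦃a b⦄, a ∈ E.J → b ∈ E.J → op a b = op b a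
  z_op : ∀ ⦃a⦄, a ∈ E.J → op z a = a
  opneg_op : ∀ ⦃a⦄, a ∈ E.J → op (opneg a) a = z
  op_lt : ∀ ⦃a b c⦄, a ∈ E.J → b ∈ E.J → c ∈ E.J → b < c → op a b < op a c
  op_graph_def : S.Def 3 {w | w 0 ∈ E.J ∧ w 1 ∈ E.J ∧ op (w 0) (w 1) = w 2}
  torsion_free : ∀ a ∈ E.J, a ≠ z → ∀ n : ℕ, 0 < n → opPow op z a n ≠ z
  lin_bdd : ∀ f : N → N, S.DefFun1 E.J f → (∀ a ∈ E.J, f a ∈ E.J) →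
      ∃ r : N → N, S.DefFun1 E.J r ∧ (∀ a ∈ E.J, r a ∈ E.J) ∧
        (∀ ⦃a b⦄, a ∈ E.J → b ∈ E.J → r (op a b) = op (r a) (r b)) ∧
        ∃ cst ∈ E.J, Filter.Tendsto (fun x => op (f x) (opneg (r x)))
            (rightEndFilter E.J) (nhds cst)

/-- Multiplication of `n × n` matrices with entries in the definable field `E`. -/
def matMul {S : Struc N} (E : OMinFieldExp S) (n : ℕ) (x y : Fin (n * n) → N) :
    Fin (n * n) → N :=
  fun p =>
    (List.ofFn (fun l : Fin n =>
        E.mul (x (finIdx (pFst p) l)) (y (finIdx l (pSnd p))))).foldr E.add E.zero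

/-- The identity `n × n` matrix with entries in the definable field `E`. -/
def matId {S : Struc N} (E : OMinFieldExp S) (n : ℕ) : Fin (n * n) → N :=
  fun p => if pFst p = pSnd p then E.one else E.zero

/-- The three kinds of division algebras over a real closed field. -/
inductive DivKind : Type
  | real : DivKind
  | cplx : DivKind
  | quat : DivKind

@[reducible] def dkDim : DivKind → ℕ
  | .real => 1
  | .cplx => 2
  | .quat => 4

/-- Multiplication in the division algebra of kind `d` (the field itself, the field
with `√-1` adjoined, or the quaternions), with coordinates in the definable field
`E`. -/
def dkMul {S : Struc N} (E : OMinFieldExp S) :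
    (d : DivKind) → (Fin (dkDim d) → N) → (Fin (dkDim d) → N) → (Fin (dkDim d) → N)
  | .real => fun x y _ => E.mul (x 0) (y 0)
  | .cplx => fun x y i =>
      if i.1 = 0 then E.add (E.mul (x 0) (y 0)) (E.neg (E.mul (x 1) (y 1)))
      else E.add (E.mul (x 0) (y 1)) (E.mul (x 1) (y 0))
  | .quat => fun x y i =>
      if i.1 = 0 then
        E.add (E.mul (x 0) (y 0)) (E.neg (E.add (E.mul (x 1) (y 1))
          (E.add (E.mul (x 2) (y 2)) (E.mul (x 3) (y 3)))))
      else if i.1 = 1 then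
        E.add (E.mul (x 0) (y 1)) (E.add (E.mul (x 1) (y 0))
          (E.add (E.mul (x 2) (y 3)) (E.neg (E.mul (x 3) (y 2)))))
      else if i.1 = 2 then
        E.add (E.mul (x 0) (y 2)) (E.add (E.neg (E.mul (x 1) (y 3)))
          (E.add (E.mul (x 2) (y 0)) (E.mul (x 3) (y 1))))
      else
        E.add (E.mul (x 0) (y 3)) (E.add (E.mul (x 1) (y 2))
          (E.add (E.neg (E.mul (x 2) (y 1))) (E.mul (x 3) (y 0))))

/-- Multiplication in the matrix algebra `M_k(D)` where `D` is the division algebra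
of kind `d` over the definable field `E`; elements are encoded as tuples in
`N^(k·k·dim D)`. -/
def matAlgMul {S : Struc N} (E : OMinFieldExp S) (d : DivKind) (k : ℕ)
    (x y : Fin (k * k * dkDim d) → N) : Fin (k * k * dkDim d) → N :=
  fun p =>
    ((List.ofFn (fun l : Fin k =>
        dkMul E d (fun cc => x (finIdx (finIdx (pFst (pFst p)) l) cc))
          (fun cc => y (finIdx (finIdx l (pSnd (pFst p))) cc)))).foldr
      (fun v w i => E.add (v i) (w i)) (fun _ => E.zero)) (pSnd p)

/-- `(F, +, ·, 0, 1, −, ⁻¹, <)` is a real closed ordered field structure on the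
subset `F ⊆ N^k`. -/
def IsRCFOn {k : ℕ} (F : Set (Fin k → N))
    (fadd fmul : (Fin k → N) → (Fin k → N) → (Fin k → N)) (fzero fone : Fin k → N)
    (fneg finv : (Fin k → N) → (Fin k → N))
    (flt : (Fin k → N) → (Fin k → N) → Prop) : Prop :=
  fzero ∈ F ∧ fone ∈ F ∧ fzero ≠ fone ∧
  (∀ x ∈ F, ∀ y ∈ F, fadd x y ∈ F ∧ fmul x y ∈ F) ∧
  (∀ x ∈ F, fneg x ∈ F ∧ finv x ∈ F) ∧
  (∀ x ∈ F, ∀ y ∈ F, ∀ z ∈ F, fadd (fadd x y) z = fadd x (fadd y z)) ∧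
  (∀ x ∈ F, ∀ y ∈ F, fadd x y = fadd y x) ∧
  (∀ x ∈ F, fadd fzero x = x) ∧
  (∀ x ∈ F, fadd (fneg x) x = fzero) ∧
  (∀ x ∈ F, ∀ y ∈ F, ∀ z ∈ F, fmul (fmul x y) z = fmul x (fmul y z)) ∧
  (∀ x ∈ F, ∀ y ∈ F, fmul x y = fmul y x) ∧
  (∀ x ∈ F, fmul fone x = x) ∧
  (∀ x ∈ F, x ≠ fzero → fmul (finv x) x = fone) ∧
  (∀ x ∈ F, ∀ y ∈ F, ∀ z ∈ F, fmul x (fadd y z) = fadd (fmul x y) (fmul x z)) ∧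
  (∀ x ∈ F, ∀ y ∈ F, flt x y ∨ x = y ∨ flt y x) ∧
  (∀ x ∈ F, ¬ flt x x) ∧
  (∀ x ∈ F, ∀ y ∈ F, ∀ z ∈ F, flt x y → flt y z → flt x z) ∧
  (∀ x ∈ F, ∀ y ∈ F, ∀ z ∈ F, flt y z → flt (fadd x y) (fadd x z)) ∧
  (∀ x ∈ F, ∀ y ∈ F, flt fzero x → flt fzero y → flt fzero (fmul x y)) ∧
  (∀ x ∈ F, (flt fzero x ∨ x = fzero) → ∃ y ∈ F, fmul y y = x) ∧
  (∀ n : ℕ, Odd n → ∀ c : Fin (n + 1) → (Fin k → N), (∀ i, c i ∈ F) →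
      c (Fin.last n) ≠ fzero → ∃ x ∈ F, polyEval fadd fmul fzero c x = fzero)

end Groups

end OMinPreamble

open Filter Set Topology

set_option linter.unusedSectionVars false

section DefinableCalculus

variable {N : Type u}

/-- A sort of the structure: a type identified with a cartesian power of `N`. -/
class Ctx (N : Type u) (Γ : Type u) where
  dim : ℕ
  coords : Γ ≃ (Fin dim → N)

/-- A type that may be the target of a definable function: a sort, or `Prop`. -/
class Tgt (N : Type u) (Δ : Type*) where
  dim : ℕ
  rel : (Fin dim → N) → Δ → Prop

instance : Ctx N N := ⟨1, (Equiv.funUnique (Fin 1) N).symm⟩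

instance {m : ℕ} : Ctx N (Fin m → N) := ⟨m, Equiv.refl _⟩

instance {Γ Δ : Type u} [Ctx N Γ] [Ctx N Δ] : Ctx N (Γ × Δ) :=
  ⟨Ctx.dim N Γ + Ctx.dim N Δ,
    (Equiv.prodCongr Ctx.coords Ctx.coords).trans (Fin.appendEquiv _ _)⟩

instance {Δ : Type u} [Ctx N Δ] : Tgt N Δ := ⟨Ctx.dim N Δ, fun v y => v = Ctx.coords y⟩

instance : Tgt N Prop := ⟨0, fun _ p => p⟩

variable [LinearOrder N]

/-- Definability of a predicate on a sort, in coordinates. -/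
def Struc.DP (S : Struc N) {Γ : Type u} [Ctx N Γ] (P : Γ → Prop) : Prop :=
  S.Def (Ctx.dim N Γ) {x | P (Ctx.coords.symm x)}

/-- Definability of a function between sorts, or of a predicate on a sort. -/
@[fun_prop]
def Struc.Dfn (S : Struc N) {Γ : Type u} {Δ : Type*} [Ctx N Γ] [Tgt N Δ] (F : Γ → Δ) : Prop :=
  S.DP (fun p : Γ × (Fin (Tgt.dim N Δ) → N) => Tgt.rel p.2 (F p.1))

/-- Maps between sorts which are given by selecting coordinates. -/
def IsCoord (N : Type u) {Γ Δ : Type u} [Ctx N Γ] [Ctx N Δ] (F : Γ → Δ) : Prop :=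
  ∃ g : Fin (Ctx.dim N Δ) → Fin (Ctx.dim N Γ), ∀ x, (Ctx.coords (F x) : _ → N) = Ctx.coords x ∘ g

variable {S : Struc N} {Γ Δ E : Type u} [Ctx N Γ] [Ctx N Δ] [Ctx N E]

lemma coords_prod (p : Γ × Δ) :
    (Ctx.coords p : _ → N) = Fin.append (Ctx.coords p.1) (Ctx.coords p.2) := rfl

namespace IsCoord

lemma id : IsCoord N (fun x : Γ => x) := ⟨fun i => i, fun _ => rfl⟩

lemma comp {g : Δ → E} {f : Γ → Δ} (hg : IsCoord N g) (hf : IsCoord N f) :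
    IsCoord N (fun x => g (f x)) := by
  obtain ⟨a, ha⟩ := hg
  obtain ⟨b, hb⟩ := hf
  exact ⟨b ∘ a, fun x => by rw [ha, hb]; rfl⟩

lemma fst {f : Γ → Δ × E} (hf : IsCoord N f) : IsCoord N (fun x => (f x).1) := by
  refine comp (g := Prod.fst) ⟨Fin.castAdd _, fun x => ?_⟩ hf
  ext i; simp [coords_prod]

lemma snd {f : Γ → Δ × E} (hf : IsCoord N f) : IsCoord N (fun x => (f x).2) := by
  refine comp (g := Prod.snd) ⟨Fin.natAdd _, fun x => ?_⟩ hf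
  ext i; simp [coords_prod]

lemma prodMk {f : Γ → Δ} {g : Γ → E} (hf : IsCoord N f) (hg : IsCoord N g) :
    IsCoord N (fun x => (f x, g x)) := by
  obtain ⟨a, ha⟩ := hf
  obtain ⟨b, hb⟩ := hg
  refine ⟨Fin.addCases a b, fun x => ?_⟩
  rw [coords_prod, ha, hb]
  ext i
  induction i using Fin.addCases <;> simp

lemma apply {m : ℕ} {f : Γ → Fin m → N} (i : Fin m) (hf : IsCoord N f) :
    IsCoord N (fun x => f x i) := by
  obtain ⟨a, ha⟩ := hf
  exact ⟨fun _ => a i, fun x => funext fun k => congrFun (ha x) i⟩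

lemma coord (i : Fin (Ctx.dim N Γ)) : IsCoord N (fun x : Γ => (Ctx.coords x i : N)) :=
  ⟨fun _ => i, fun _ => rfl⟩

lemma pi {m : ℕ} {f : Γ → Fin m → N} (hf : ∀ i, IsCoord N (fun x => f x i)) :
    IsCoord N f := by
  choose a ha using hf
  exact ⟨fun i => a i 0, fun x => funext fun i => congrFun (ha i x) 0⟩

end IsCoord

namespace Struc.DP

lemma reindex {P : Δ → Prop} {F : Γ → Δ} (hP : S.DP P) (hF : IsCoord N F) :
    S.DP (fun x => P (F x)) := by
  obtain ⟨g, hg⟩ := hF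
  have := S.def_reindex g hP
  unfold Struc.DP
  convert this using 3 with x
  simp only [mem_ofPred_eq]
  rw [← Ctx.coords.apply_symm_apply x, ← hg]
  simp

lemma and {P Q : Γ → Prop} (hP : S.DP P) (hQ : S.DP Q) : S.DP (fun x => P x ∧ Q x) :=
  S.def_inter hP hQ

lemma not {P : Γ → Prop} (hP : S.DP P) : S.DP (fun x => ¬ P x) := S.def_compl hP

lemma true : S.DP (fun _ : Γ => True) := S.def_univ _

lemma congr {P Q : Γ → Prop} (hP : S.DP P) (h : ∀ x, Q x ↔ P x) : S.DP Q := by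
  rwa [show Q = P from funext fun x => propext (h x)]

lemma finite_all {k : ℕ} {P : Fin k → Γ → Prop} (hP : ∀ i, S.DP (P i)) :
    S.DP (fun x => ∀ i, P i x) := by
  induction k with
  | zero => simpa using true
  | succ k ih =>
    simp_rw [Fin.forall_fin_succ]
    exact (hP 0).and (ih fun i => hP i.succ)

lemma def_ex {a b : ℕ} {A : Set (Fin (a + b) → N)} (hA : S.Def (a + b) A) :
    S.Def a {x | ∃ y : Fin b → N, Fin.append x y ∈ A} := by
  induction b with
  | zero =>
    convert S.def_reindex (Fin.cast (add_zero a)) hA using 2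
    ext x
    simp only [Fin.append_right_nil _ _ rfl, exists_const]
  | succ b ih =>
    convert ih (S.def_proj hA) using 2
    ext x
    simp only [mem_ofPred_eq]
    constructor
    · rintro ⟨y, hy⟩
      refine ⟨Fin.init y, y (Fin.last b), ?_⟩
      rwa [← Fin.append_snoc, Fin.snoc_init_self]
    · rintro ⟨y, t, h⟩
      exact ⟨Fin.snoc y t, by rwa [Fin.append_snoc]⟩

lemma ex {P : Γ × Δ → Prop} (hP : S.DP P) : S.DP (fun x => ∃ y, P (x, y)) := by
  have := def_ex (a := Ctx.dim N Γ) (b := Ctx.dim N Δ) hP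
  unfold Struc.DP
  convert this using 3 with x
  change (∃ y, P (Ctx.coords.symm x, y)) ↔
    ∃ y, P (((Fin.appendEquiv _ _).symm (Fin.append x y)).map Ctx.coords.symm Ctx.coords.symm)
  refine Iff.trans ?_ (Ctx.coords (N := N) (Γ := Δ)).exists_congr_right
  refine exists_congr fun y => ?_
  rw [show Fin.append x (Ctx.coords y) = Fin.appendEquiv _ _ (x, Ctx.coords y) from rfl]
  simp

lemma ex' {P : Γ → Δ → Prop} (hP : S.DP (fun p : Γ × Δ => P p.1 p.2)) :
    S.DP (fun x => ∃ y, P x y) := ex hP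

lemma eqN : S.DP (fun p : N × N => p.1 = p.2) := by
  have h : S.DP (fun p : N × N => p.1 < p.2) := S.def_lt
  have h' : S.DP (fun p : N × N => p.2 < p.1) := h.reindex (.prodMk (.snd .id) (.fst .id))
  convert h.not.and h'.not using 2 with p
  simp [le_antisymm_iff, and_comm]

lemma eqC {f g : Γ → Δ} (hf : IsCoord N f) (hg : IsCoord N g) : S.DP (fun x => f x = g x) := by
  have : S.DP (fun x => ∀ i, (Ctx.coords (f x) i : N) = Ctx.coords (g x) i) :=
    finite_all fun i => eqN.reindex (.prodMk ((IsCoord.coord i).comp hf) ((IsCoord.coord i).comp hg))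
  convert this using 2 with x
  rw [← funext_iff, Ctx.coords.apply_eq_iff_eq]

lemma eqConst (a : Γ) : S.DP (fun x : Γ => x = a) := by
  have h1 (b : N) : S.DP (fun y : N => y = b) := S.def_pt b
  have : S.DP (fun x : Γ => ∀ i, (Ctx.coords x i : N) = Ctx.coords a i) :=
    finite_all fun i => (h1 _).reindex (IsCoord.coord i)
  convert this using 2 with x
  rw [← funext_iff, Ctx.coords.apply_eq_iff_eq]

end Struc.DP

lemma dfn_iff_dp {P : Γ → Prop} : S.Dfn P ↔ S.DP P := by
  constructor
  · intro h
    convert Struc.DP.ex (Δ := Fin 0 → N) h using 2 with x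
    exact ⟨fun h => ⟨Fin.elim0, h⟩, fun ⟨_, h⟩ => h⟩
  · intro h
    exact h.reindex (.fst .id)

lemma dfn_iff_graph {f : Γ → Δ} : S.Dfn f ↔ S.DP (fun p : Γ × Δ => p.2 = f p.1) := by
  constructor
  · intro h
    convert h.reindex (F := fun p : Γ × Δ => (p.1, fun i => Ctx.coords p.2 i))
      (.prodMk (.fst .id) (.pi fun i => (IsCoord.coord i).comp (.snd .id))) using 2 with p
    exact Ctx.coords.apply_eq_iff_eq.symm
  · intro h
    refine (Struc.DP.ex (P := fun q : (Γ × (Fin (Ctx.dim N Δ) → N)) × Δ =>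
      q.2 = f q.1.1 ∧ q.1.2 = Ctx.coords q.2) ?_).congr ?_
    · refine (h.reindex (F := fun q : (Γ × (Fin (Ctx.dim N Δ) → N)) × Δ => (q.1.1, q.2))
        (.prodMk (.fst (.fst .id)) (.snd .id))).and (Struc.DP.eqC (.snd (.fst .id)) ?_)
      exact .pi fun i => (IsCoord.coord i).comp (.snd .id)
    · simp [Tgt.rel]

end DefinableCalculus

section DefinableCalculus2

variable {N : Type u} [LinearOrder N] {S : Struc N} {Γ Δ E : Type u} [Ctx N Γ] [Ctx N Δ] [Ctx N E]

lemma IsCoord.dfn {f : Γ → Δ} (hf : IsCoord N f) : S.Dfn f :=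
  dfn_iff_graph.2 (Struc.DP.eqC (.snd .id) (hf.comp (.fst .id)))

namespace Struc.Dfn

lemma congr {P Q : Γ → Prop} (hP : S.Dfn P) (h : ∀ x, Q x ↔ P x) : S.Dfn Q := by
  rwa [show Q = P from funext fun x => propext (h x)]

@[fun_prop]
lemma id' : S.Dfn (fun x : Γ => x) := IsCoord.id.dfn

@[fun_prop]
lemma const (y : Δ) : S.Dfn (fun _ : Γ => y) :=
  dfn_iff_graph.2 ((Struc.DP.eqConst y).reindex (.snd .id))

@[fun_prop]
lemma constProp (y : Prop) : S.Dfn (fun _ : Γ => y) := by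
  rw [dfn_iff_dp]
  by_cases h : y
  · exact Struc.DP.true.congr (by simp [h])
  · exact Struc.DP.true.not.congr (by simp [h])

@[fun_prop]
lemma comp {T : Type*} [Tgt N T] {g : Δ → T} {f : Γ → Δ} (hg : S.Dfn g) (hf : S.Dfn f) :
    S.Dfn (fun x => g (f x)) := by
  refine (Struc.DP.ex (P := fun q : (Γ × (Fin (Tgt.dim N T) → N)) × Δ =>
    q.2 = f q.1.1 ∧ Tgt.rel q.1.2 (g q.2)) ?_).congr ?_
  · refine Struc.DP.and ?_ ?_
    · exact (dfn_iff_graph.1 hf).reindex (F := fun q : (Γ × (Fin (Tgt.dim N T) → N)) × Δ =>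
        (q.1.1, q.2)) (.prodMk (.fst (.fst .id)) (.snd .id))
    · exact Struc.DP.reindex (F := fun q : (Γ × (Fin (Tgt.dim N T) → N)) × Δ =>
        (q.2, q.1.2)) hg (.prodMk (.snd .id) (.snd (.fst .id)))
  · simp

@[fun_prop]
lemma fst {f : Γ → Δ × E} (hf : S.Dfn f) : S.Dfn (fun x => (f x).1) :=
  (IsCoord.fst .id).dfn.comp hf

@[fun_prop]
lemma snd {f : Γ → Δ × E} (hf : S.Dfn f) : S.Dfn (fun x => (f x).2) :=
  (IsCoord.snd .id).dfn.comp hf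

@[fun_prop]
lemma apply' {n : ℕ} (i : Fin n) : S.Dfn (fun x : Fin n → N => x i) :=
  (IsCoord.apply i .id).dfn

lemma apply {n : ℕ} {f : Γ → Fin n → N} (i : Fin n) (hf : S.Dfn f) : S.Dfn (fun x => f x i) :=
  (IsCoord.apply i .id).dfn.comp hf

@[fun_prop]
lemma and {P Q : Γ → Prop} (hP : S.Dfn P) (hQ : S.Dfn Q) : S.Dfn (fun x => P x ∧ Q x) :=
  dfn_iff_dp.2 ((dfn_iff_dp.1 hP).and (dfn_iff_dp.1 hQ))

@[fun_prop]
lemma not {P : Γ → Prop} (hP : S.Dfn P) : S.Dfn (fun x => ¬ P x) :=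
  dfn_iff_dp.2 (dfn_iff_dp.1 hP).not

@[fun_prop]
lemma or {P Q : Γ → Prop} (hP : S.Dfn P) (hQ : S.Dfn Q) : S.Dfn (fun x => P x ∨ Q x) :=
  (hP.not.and hQ.not).not.congr fun x => by tauto

@[fun_prop]
lemma imp {P Q : Γ → Prop} (hP : S.Dfn P) (hQ : S.Dfn Q) : S.Dfn (fun x => P x → Q x) :=
  (hP.and hQ.not).not.congr fun x => by tauto

@[fun_prop]
lemma ex {P : Γ → Δ → Prop} (hP : S.Dfn (fun p : Γ × Δ => P p.1 p.2)) :
    S.Dfn (fun x => ∃ y, P x y) :=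
  dfn_iff_dp.2 (dfn_iff_dp.1 hP).ex'

@[fun_prop]
lemma all {P : Γ → Δ → Prop} (hP : S.Dfn (fun p : Γ × Δ => P p.1 p.2)) :
    S.Dfn (fun x => ∀ y, P x y) :=
  (ex (P := fun x y => ¬ P x y) hP.not).not.congr fun x => by simp

@[fun_prop]
lemma finite_all {k : ℕ} {P : Γ → Fin k → Prop} (hP : ∀ i, S.Dfn (fun x => P x i)) :
    S.Dfn (fun x => ∀ i, P x i) :=
  dfn_iff_dp.2 (Struc.DP.finite_all fun i => dfn_iff_dp.1 (hP i))

@[fun_prop]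
lemma finite_ex {k : ℕ} {P : Γ → Fin k → Prop} (hP : ∀ i, S.Dfn (fun x => P x i)) :
    S.Dfn (fun x => ∃ i, P x i) :=
  (finite_all fun i => (hP i).not).not.congr fun x => by simp

lemma ofGraph {f : Γ → Δ} (hf : S.Dfn (fun p : Γ × Δ => p.2 = f p.1)) : S.Dfn f :=
  dfn_iff_graph.2 (dfn_iff_dp.1 hf)

lemma graph {f : Γ → Δ} (hf : S.Dfn f) : S.Dfn (fun p : Γ × Δ => p.2 = f p.1) :=
  dfn_iff_dp.2 (dfn_iff_graph.1 hf)

@[fun_prop]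
lemma prodMk {f : Γ → Δ} {g : Γ → E} (hf : S.Dfn f) (hg : S.Dfn g) :
    S.Dfn (fun x => (f x, g x)) := by
  apply ofGraph
  have h1 : S.Dfn (fun p : Γ × (Δ × E) => p.2.1 = f p.1) :=
    hf.graph.comp (IsCoord.dfn (f := fun p : Γ × (Δ × E) => (p.1, p.2.1))
      (.prodMk (.fst .id) (.fst (.snd .id))))
  have h2 : S.Dfn (fun p : Γ × (Δ × E) => p.2.2 = g p.1) :=
    hg.graph.comp (IsCoord.dfn (f := fun p : Γ × (Δ × E) => (p.1, p.2.2))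
      (.prodMk (.fst .id) (.snd (.snd .id))))
  exact (h1.and h2).congr fun p => Prod.ext_iff

@[fun_prop]
lemma eq {f g : Γ → Δ} (hf : S.Dfn f) (hg : S.Dfn g) : S.Dfn (fun x => f x = g x) :=
  (hg.graph.comp (Dfn.id'.prodMk hf))

@[fun_prop]
lemma lt {f g : Γ → N} (hf : S.Dfn f) (hg : S.Dfn g) : S.Dfn (fun x => f x < g x) := by
  have h : S.DP (fun p : N × N => p.1 < p.2) := S.def_lt
  exact (dfn_iff_dp.2 h).comp (hf.prodMk hg)

@[fun_prop]
lemma le {f g : Γ → N} (hf : S.Dfn f) (hg : S.Dfn g) : S.Dfn (fun x => f x ≤ g x) :=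
  (hg.lt hf).not.congr fun _ => not_lt.symm

@[fun_prop]
lemma gt {f g : Γ → N} (hf : S.Dfn f) (hg : S.Dfn g) : S.Dfn (fun x => f x > g x) := hg.lt hf

@[fun_prop]
lemma ge {f g : Γ → N} (hf : S.Dfn f) (hg : S.Dfn g) : S.Dfn (fun x => f x ≥ g x) := hg.le hf

@[fun_prop]
lemma pi {n : ℕ} {f : Γ → Fin n → N} (hf : ∀ i, S.Dfn (fun x => f x i)) :
    S.Dfn (fun x i => f x i) := by
  apply ofGraph
  refine (finite_all (P := fun p : Γ × (Fin n → N) => fun i => p.2 i = f p.1 i) ?_).congr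
    fun _ => funext_iff
  intro i
  fun_prop

@[fun_prop]
lemma cons {n : ℕ} {f : Γ → N} {g : Γ → Fin n → N} (hf : S.Dfn f) (hg : S.Dfn g) :
    S.Dfn (fun x => (Fin.cons (f x) (g x) : Fin (n + 1) → N)) :=
  pi fun i => by induction i using Fin.cases <;> simp <;> fun_prop

@[fun_prop]
lemma tail {n : ℕ} {g : Γ → Fin (n + 1) → N} (hg : S.Dfn g) :
    S.Dfn (fun x => Fin.tail (g x)) :=
  pi fun _ => hg.apply _

@[fun_prop]
lemma append {m n : ℕ} {f : Γ → Fin m → N} {g : Γ → Fin n → N} (hf : S.Dfn f) (hg : S.Dfn g) :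
    S.Dfn (fun x => (Fin.append (f x) (g x) : Fin (m + n) → N)) :=
  pi fun i => by induction i using Fin.addCases <;> simp <;> fun_prop

@[fun_prop]
lemma update {n : ℕ} {f : Γ → N} {g : Γ → Fin n → N} (i : Fin n) (hf : S.Dfn f) (hg : S.Dfn g) :
    S.Dfn (fun x => Function.update (g x) i (f x)) :=
  pi fun j => by
    by_cases h : j = i
    · subst h; simpa using hf
    · simpa [h] using hg.apply j

open Classical in
@[fun_prop]
lemma ite {P : Γ → Prop} {f g : Γ → Δ} (hP : S.Dfn P) (hf : S.Dfn f) (hg : S.Dfn g) :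
    S.Dfn (fun x => if P x then f x else g x) := by
  apply ofGraph
  have : S.Dfn (fun p : Γ × Δ => (P p.1 ∧ p.2 = f p.1) ∨ (¬ P p.1 ∧ p.2 = g p.1)) := by fun_prop
  refine this.congr fun p => ?_
  split_ifs <;> simp_all

/-- A definable functional relation is the graph of a definable function, on its domain. -/
lemma exists_choice {Q : Γ → Δ → Prop} [Nonempty Δ] (hQ : S.Dfn (fun p : Γ × Δ => Q p.1 p.2))
    (huniq : ∀ x y y', Q x y → Q x y' → y = y') :
    ∃ c : Γ → Δ, S.Dfn c ∧ ∀ x, (∃ y, Q x y) → Q x (c x) := by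
  classical
  obtain ⟨d⟩ := ‹Nonempty Δ›
  refine ⟨fun x => if h : ∃ y, Q x y then h.choose else d, ofGraph ?_, fun x h => ?_⟩
  · have : S.Dfn (fun p : Γ × Δ => Q p.1 p.2 ∨ ((¬ ∃ y, Q p.1 y) ∧ p.2 = d)) := by fun_prop
    refine this.congr fun p => ?_
    by_cases h : ∃ y, Q p.1 y
    · simp only [h, dite_true, not_true_eq_false, false_and, or_false]
      refine ⟨fun e => e ▸ h.choose_spec, fun e => huniq _ _ _ e h.choose_spec⟩
    · have : ¬ Q p.1 p.2 := fun e => h ⟨_, e⟩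
      simp [h, this]
  · simpa [h] using h.choose_spec

/-- Definable choice of least elements. -/
lemma exists_choice_min [Nonempty N] {Q : Γ → N → Prop} (hQ : S.Dfn (fun p : Γ × N => Q p.1 p.2)) :
    ∃ c : Γ → N, S.Dfn c ∧ ∀ x, (∃ y, IsLeast {y | Q x y} y) → Q x (c x) := by
  obtain ⟨c, hc, h⟩ := exists_choice (S := S) (Q := fun x y => Q x y ∧ ∀ z, Q x z → y ≤ z)
    (by fun_prop) (fun x y y' h h' => le_antisymm (h.2 _ h'.1) (h'.2 _ h.1))
  exact ⟨c, hc, fun x ⟨y, hy⟩ => (h x ⟨y, hy.1, fun z hz => hy.2 hz⟩).1⟩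

end Struc.Dfn

lemma dfn_mem_iff {m : ℕ} {A : Set (Fin m → N)} : S.Dfn (fun x => x ∈ A) ↔ S.Def m A :=
  dfn_iff_dp

end DefinableCalculus2

section OneVariable

variable {N : Type u} [LinearOrder N] [DenselyOrdered N] [NoMinOrder N] [NoMaxOrder N] [Nonempty N]
  {S : Struc N} {Γ Δ E : Type u} [Ctx N Γ] [Ctx N Δ] [Ctx N E]

/-- There are infinitely many `t` with `P t`. -/
def Inf (P : N → Prop) : Prop := {t | P t}.Infinite

/-- The point `c` is a frontier point of `{t | P t}`. -/
def Fr (P : N → Prop) (c : N) : Prop :=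
  ∀ a b, a < c → c < b → (∃ t, a < t ∧ t < b ∧ P t) ∧ ∃ t, a < t ∧ t < b ∧ ¬ P t

lemma Struc.Dfn.omin {P : N → Prop} (hP : S.Dfn P) : IsFinUnionPtsIntervals {t | P t} :=
  S.o_min (dfn_iff_dp.1 hP)

lemma Inf.mono {P Q : N → Prop} (h : Inf P) (hPQ : ∀ t, P t → Q t) : Inf Q :=
  Set.Infinite.mono hPQ h

lemma Inf.exists {P : N → Prop} (h : Inf P) : ∃ t, P t := h.nonempty

lemma not_inf {P : N → Prop} : ¬ Inf P ↔ {t | P t}.Finite := Set.not_infinite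

lemma inf_of_Ioo {P : N → Prop} {a b : N} (hab : a < b) (h : ∀ t, a < t → t < b → P t) : Inf P :=
  (Set.Ioo_infinite hab).mono fun t ht => h t ht.1 ht.2

lemma Inf.exists_Ioo {P : N → Prop} (h : Inf P) (hP : S.Dfn P) :
    ∃ a b, a < b ∧ ∀ t, a < t → t < b → P t := by
  obtain ⟨k, f, hf, hu⟩ := hP.omin
  have : ∃ i, (f i).Infinite := by
    by_contra! hc
    exact h (hu ▸ Set.finite_iUnion fun i => hc i)
  obtain ⟨i, hi⟩ := this
  have hsub : ∀ t, t ∈ f i → P t := fun t ht => by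
    have : t ∈ {t | P t} := hu ▸ Set.mem_iUnion_of_mem i ht
    exact this
  obtain ⟨z⟩ := ‹Nonempty N›
  rcases hf i with ⟨a, e⟩ | ⟨a, b, e⟩ | ⟨a, e⟩ | ⟨b, e⟩ | e <;> rw [e] at hi hsub
  · exact absurd (Set.finite_singleton a) hi
  · refine ⟨a, b, ?_, fun t h1 h2 => hsub t ⟨h1, h2⟩⟩
    by_contra hab
    exact hi (by simp [Set.Ioo_eq_empty hab])
  · obtain ⟨b, hb⟩ := exists_gt a
    exact ⟨a, b, hb, fun t h1 _ => hsub t h1⟩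
  · obtain ⟨a, ha⟩ := exists_lt b
    exact ⟨a, b, ha, fun t _ h1 => hsub t h1⟩
  · obtain ⟨b, hb⟩ := exists_gt z
    exact ⟨z, b, hb, fun t _ _ => hsub t trivial⟩

lemma inf_iff {P : N → Prop} (hP : S.Dfn P) :
    Inf P ↔ ∃ a b, a < b ∧ ∀ t, a < t → t < b → P t :=
  ⟨fun h => h.exists_Ioo hP, fun ⟨_, _, h, h'⟩ => inf_of_Ioo h h'⟩

lemma Struc.Dfn.right {T : Type*} [Tgt N T] {P : Γ → Δ → T}
    (hP : S.Dfn (fun p : Γ × Δ => P p.1 p.2)) (x : Γ) : S.Dfn (fun t => P x t) :=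
  hP.comp ((Struc.Dfn.const x).prodMk Struc.Dfn.id')

@[fun_prop]
lemma Struc.Dfn.inf {P : Γ → N → Prop} (hP : S.Dfn (fun p : Γ × N => P p.1 p.2)) :
    S.Dfn (fun x => Inf (fun t => P x t)) := by
  have : S.Dfn (fun x => ∃ a b, a < b ∧ ∀ t, a < t → t < b → P x t) := by fun_prop
  exact this.congr fun x => inf_iff (hP.right x)

@[fun_prop]
lemma Struc.Dfn.fr {P : Γ → N → Prop} {c : Γ → N} (hP : S.Dfn (fun p : Γ × N => P p.1 p.2))
    (hc : S.Dfn c) : S.Dfn (fun x => Fr (fun t => P x t) (c x)) := by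
  unfold Fr
  fun_prop

lemma inf_or {P Q : N → Prop} (h : Inf (fun t => P t ∨ Q t)) : Inf P ∨ Inf Q := by
  by_contra! hc
  exact h ((not_inf.1 hc.1).union (not_inf.1 hc.2))

lemma fr_finite {P : N → Prop} (hP : S.Dfn P) : {c | Fr P c}.Finite := by
  by_contra h
  obtain ⟨a, b, hab, hI⟩ := Inf.exists_Ioo (S := S) (P := Fr P) h (by unfold Fr; fun_prop)
  have : Inf (fun t => ((a < t ∧ t < b) ∧ P t) ∨ ((a < t ∧ t < b) ∧ ¬ P t)) :=
    inf_of_Ioo hab fun t h1 h2 => by tauto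
  rcases inf_or this with h | h
  · obtain ⟨c, d, hcd, h⟩ := h.exists_Ioo (S := S) (by fun_prop)
    obtain ⟨t, ht, ht'⟩ := exists_between hcd
    obtain ⟨s, h1, h2, h3⟩ := (hI t (h t ht ht').1.1 (h t ht ht').1.2 c d ht ht').2
    exact h3 (h s h1 h2).2
  · obtain ⟨c, d, hcd, h⟩ := h.exists_Ioo (S := S) (by fun_prop)
    obtain ⟨t, ht, ht'⟩ := exists_between hcd
    obtain ⟨s, h1, h2, h3⟩ := (hI t (h t ht ht').1.1 (h t ht ht').1.2 c d ht ht').1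
    exact (h s h1 h2).2 h3

lemma exists_lub {P : N → Prop} (hP : S.Dfn P) (hne : ∃ t, P t) (hb : BddAbove {t | P t}) :
    ∃ c, IsLUB {t | P t} c := by
  obtain ⟨k, f, hf, hu⟩ := hP.omin
  have key : ∀ i, (f i).Nonempty → ∃ c, IsLUB (f i) c := by
    intro i hne
    have hb' : BddAbove (f i) := hb.mono (hu ▸ Set.subset_iUnion f i)
    rcases hf i with ⟨a, e⟩ | ⟨a, b, e⟩ | ⟨a, e⟩ | ⟨b, e⟩ | e <;> rw [e] at hne hb' ⊢
    · exact ⟨a, isLUB_singleton⟩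
    · exact ⟨b, isLUB_Ioo (Set.nonempty_Ioo.1 hne)⟩
    · exact absurd hb' (not_bddAbove_Ioi a)
    · exact ⟨b, isLUB_Iio⟩
    · exact absurd hb' not_bddAbove_univ
  have : ∀ i, ∃ c, (f i).Nonempty → IsLUB (f i) c := fun i => by
    by_cases h : (f i).Nonempty
    · obtain ⟨c, hc⟩ := key i h
      exact ⟨c, fun _ => hc⟩
    · exact ⟨Classical.arbitrary N, fun h' => absurd h' h⟩
  choose c hc using this
  have hfin : {i | (f i).Nonempty}.Finite := Set.toFinite _
  have hne' : {i | (f i).Nonempty}.Nonempty := by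
    obtain ⟨t, ht⟩ := hne
    have : t ∈ ⋃ i, f i := hu ▸ ht
    obtain ⟨i, hi⟩ := Set.mem_iUnion.1 this
    exact ⟨i, ⟨t, hi⟩⟩
  obtain ⟨i, hi, hmax⟩ := Set.exists_max_image _ c hfin hne'
  refine ⟨c i, ?_, fun y hy => (hc i hi).2 fun t ht => hy (hu ▸ Set.mem_iUnion_of_mem i ht)⟩
  intro t ht
  rw [hu] at ht
  obtain ⟨j, hj⟩ := Set.mem_iUnion.1 ht
  exact ((hc j ⟨t, hj⟩).1 hj).trans (hmax j ⟨t, hj⟩)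

lemma exists_glb {P : N → Prop} (hP : S.Dfn P) (hne : ∃ t, P t) (hb : BddBelow {t | P t}) :
    ∃ c, IsGLB {t | P t} c := by
  have hd : S.Dfn (fun c => ∀ t, P t → c ≤ t) := by fun_prop
  obtain ⟨t, ht⟩ := hne
  obtain ⟨c, hc⟩ := hb
  obtain ⟨d, hd⟩ := exists_lub hd ⟨c, fun t ht => hc ht⟩ ⟨t, fun c hc => hc t ht⟩
  exact ⟨d, isLUB_lowerBounds.1 hd⟩

lemma Fr.compl {P : N → Prop} {c : N} (h : Fr (fun t => ¬ P t) c) : Fr P c := by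
  intro a b ha hb
  obtain ⟨h1, t, h2, h3, h4⟩ := h a b ha hb
  exact ⟨⟨t, h2, h3, not_not.1 h4⟩, h1⟩

lemma exists_fr_aux {P : N → Prop} (hP : S.Dfn P) {x y : N} (hxy : x < y) (hx : P x)
    (hy : ¬ P y) : ∃ c, x ≤ c ∧ c ≤ y ∧ Fr P c := by
  obtain ⟨c, hc⟩ := exists_lub (S := S) (P := fun t => x ≤ t ∧ t ≤ y ∧ ∀ s, x ≤ s → s ≤ t → P s)
    (by fun_prop) ⟨x, le_rfl, hxy.le, fun s h1 h2 => le_antisymm h1 h2 ▸ hx⟩ ⟨y, fun t ht => ht.2.1⟩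
  have hxc : x ≤ c := hc.1 ⟨le_rfl, hxy.le, fun s h1 h2 => le_antisymm h1 h2 ▸ hx⟩
  have hcy : c ≤ y := hc.2 fun t ht => ht.2.1
  refine ⟨c, hxc, hcy, fun a b ha hb => ?_⟩
  obtain ⟨t, ht, h1, h2⟩ := hc.exists_between ha
  refine ⟨⟨t, h1, h2.trans_lt hb, ht.2.2 t ht.1 le_rfl⟩, ?_⟩
  by_contra! hcon
  rcases hcy.eq_or_lt with e | hlt
  · exact hy (hcon y (e ▸ ha) (e ▸ hb))
  · obtain ⟨c', h3, h4⟩ := exists_between (lt_min hb hlt)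
    refine absurd (hc.1 ⟨hxc.trans h3.le, (h4.trans_le (min_le_right _ _)).le, fun s h5 h6 => ?_⟩)
      (not_le.2 h3)
    rcases le_or_gt s t with h | h
    · exact ht.2.2 s h5 h
    · exact hcon s (h1.trans h) (h6.trans_lt (h4.trans_le (min_le_left _ _)))

lemma exists_fr {P : N → Prop} (hP : S.Dfn P) {x y : N} (hxy : x ≤ y) (hne : ¬ (P x ↔ P y)) :
    ∃ c, x ≤ c ∧ c ≤ y ∧ Fr P c := by
  have hlt : x < y := lt_of_le_of_ne hxy fun e => hne (by rw [e])
  by_cases hx : P x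
  · exact exists_fr_aux hP hlt hx (by tauto)
  · obtain ⟨c, h1, h2, h3⟩ := exists_fr_aux hP.not hlt hx (by tauto)
    exact ⟨c, h1, h2, h3.compl⟩

/-- On an interval without frontier points a definable set is trivial. -/
lemma iff_of_no_fr {P : N → Prop} (hP : S.Dfn P) {I : Set N} (hI : I.OrdConnected)
    (h : ∀ c ∈ I, ¬ Fr P c) : ∀ x ∈ I, ∀ y ∈ I, (P x ↔ P y) := by
  have aux : ∀ x ∈ I, ∀ y ∈ I, x ≤ y → (P x ↔ P y) := by
    intro x hx y hy hxy
    by_contra hne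
    obtain ⟨c, h1, h2, h3⟩ := exists_fr hP hxy hne
    exact h c (hI.out hx hy ⟨h1, h2⟩) h3
  intro x hx y hy
  rcases le_total x y with h | h
  · exact aux x hx y hy h
  · exact (aux y hy x hx h).symm

lemma forall_or_of_no_fr {P : N → Prop} (hP : S.Dfn P) {I : Set N} (hI : I.OrdConnected)
    (h : ∀ c ∈ I, ¬ Fr P c) : (∀ x ∈ I, P x) ∨ (∀ x ∈ I, ¬ P x) := by
  have := iff_of_no_fr hP hI h
  by_cases hx : ∃ x ∈ I, P x
  · obtain ⟨x, hx, hx'⟩ := hx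
    exact .inl fun y hy => (this x hx y hy).1 hx'
  · exact .inr fun x h1 h2 => hx ⟨x, h1, h2⟩

lemma exists_right_free {F : Set N} (hF : F.Finite) (c : N) : ∃ d, c < d ∧ ∀ t ∈ F, c < t → d ≤ t := by
  by_cases h : (F ∩ Ioi c).Nonempty
  · obtain ⟨d, hd, hmin⟩ := Set.exists_min_image _ id (hF.inter_of_left (Ioi c)) h
    exact ⟨d, hd.2, fun t h1 h2 => hmin t ⟨h1, h2⟩⟩
  · obtain ⟨d, hd⟩ := exists_gt c
    exact ⟨d, hd, fun t h1 h2 => absurd ⟨t, h1, h2⟩ h⟩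

lemma exists_left_free {F : Set N} (hF : F.Finite) (c : N) : ∃ d, d < c ∧ ∀ t ∈ F, t < c → t ≤ d := by
  by_cases h : (F ∩ Iio c).Nonempty
  · obtain ⟨d, hd, hmin⟩ := Set.exists_max_image _ id (hF.inter_of_left (Iio c)) h
    exact ⟨d, hd.2, fun t h1 h2 => hmin t ⟨h1, h2⟩⟩
  · obtain ⟨d, hd⟩ := exists_lt c
    exact ⟨d, hd, fun t h1 h2 => absurd ⟨t, h1, h2⟩ h⟩

lemma exists_lower_free {F : Set N} (hF : F.Finite) : ∃ d, ∀ t ∈ F, d < t := by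
  obtain ⟨b, hb⟩ := hF.bddBelow
  obtain ⟨d, hd⟩ := exists_lt b
  exact ⟨d, fun t ht => hd.trans_le (hb ht)⟩

lemma right_germ {P : N → Prop} (hP : S.Dfn P) (c : N) :
    ∃ d, c < d ∧ ((∀ t, c < t → t < d → P t) ∨ (∀ t, c < t → t < d → ¬ P t)) := by
  obtain ⟨d, hd, h⟩ := exists_right_free (fr_finite hP) c
  refine ⟨d, hd, ?_⟩
  refine (forall_or_of_no_fr hP (I := Ioo c d) Set.ordConnected_Ioo
    fun t ht hF => not_lt.2 (h t hF ht.1) ht.2).imp ?_ ?_ <;>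
  exact fun h t h1 h2 => h t ⟨h1, h2⟩

lemma left_germ {P : N → Prop} (hP : S.Dfn P) (c : N) :
    ∃ d, d < c ∧ ((∀ t, d < t → t < c → P t) ∨ (∀ t, d < t → t < c → ¬ P t)) := by
  obtain ⟨d, hd, h⟩ := exists_left_free (fr_finite hP) c
  refine ⟨d, hd, ?_⟩
  refine (forall_or_of_no_fr hP (I := Ioo d c) Set.ordConnected_Ioo
    fun t ht hF => not_lt.2 (h t hF ht.2) ht.1).imp ?_ ?_ <;>
  exact fun h t h1 h2 => h t ⟨h1, h2⟩

lemma bot_germ {P : N → Prop} (hP : S.Dfn P) :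
    ∃ d, (∀ t, t < d → P t) ∨ (∀ t, t < d → ¬ P t) := by
  obtain ⟨d, h⟩ := exists_lower_free (fr_finite hP)
  exact ⟨d, forall_or_of_no_fr hP (I := Iio d) Set.ordConnected_Iio
    fun t ht hF => lt_asymm ht (h t hF)⟩

end OneVariable

section Commutation

variable {N : Type u} [LinearOrder N] [DenselyOrdered N] [NoMinOrder N] [NoMaxOrder N] [Nonempty N]
  {S : Struc N} {Γ Δ E : Type u} [Ctx N Γ] [Ctx N Δ] [Ctx N E]

lemma Inf.image {P Q : N → Prop} (h : Inf P) {f : N → N} (hPQ : ∀ t, P t → Q (f t))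
    (hinj : ∀ t s, P t → P s → f t = f s → t = s) : Inf Q :=
  (Set.Infinite.image (f := f) (fun t ht s hs e => hinj t s ht hs e) h).mono
    (by rintro _ ⟨t, ht, rfl⟩; exact hPQ t ht)

lemma Inf.fibre_or_image {P : N → Prop} (h : Inf P) (f : N → N) :
    (∃ c, Inf (fun t => P t ∧ f t = c)) ∨ Inf (fun c => ∃ t, P t ∧ f t = c) := by
  by_contra! hc
  refine h ((Set.Finite.preimage' (f := fun t : {t // P t} => f t) (not_inf.1 hc.2) ?_).image
    Subtype.val |>.subset ?_)
  · intro c _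
    refine Set.Finite.of_finite_image (f := Subtype.val) ((not_inf.1 (hc.1 c)).subset ?_)
      Subtype.val_injective.injOn
    rintro _ ⟨t, ht, rfl⟩
    exact ⟨t.2, ht⟩
  · intro t ht
    exact ⟨⟨t, ht⟩, ⟨t, ht, rfl⟩, rfl⟩

lemma Inf.exists_least {P : N → Prop} (hfin : ¬ Inf P) (hne : ∃ t, P t) :
    ∃ t, IsLeast {t | P t} t := by
  obtain ⟨t, ht, h⟩ := Set.exists_min_image _ id (not_inf.1 hfin) hne
  exact ⟨t, ht, fun s hs => h s hs⟩

lemma exists_inf_of_right_germ {Ψ : N → N → Prop} (hΨ : S.Dfn (fun p : N × N => Ψ p.1 p.2))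
    {a b : N} (hab : a < b)
    (h : ∀ c, a < c → c < b → ∃ d, c < d ∧ ∀ t, c < t → t < d → Ψ c t) :
    ∃ x, a < x ∧ x < b ∧ Inf (fun c => (a < c ∧ c < x) ∧ Ψ c x) := by
  let E : N → N → Prop := fun c d => d ≤ b ∧ c < d ∧ ∀ t, c < t → t < d → Ψ c t
  have hE : S.Dfn (fun p : N × N => E p.1 p.2) := by dsimp only [E]; fun_prop
  obtain ⟨ρ, hρ, hρs⟩ := Struc.Dfn.exists_choice (S := S)
    (Q := fun c r => E c r ∧ ∀ e, E c e → e ≤ r) (by fun_prop)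
    (fun x y y' h h' => le_antisymm (h'.2 _ h.1) (h.2 _ h'.1))
  replace hρs : ∀ c, a < c → c < b → E c (ρ c) := by
    intro c hac hcb
    refine (hρs c ?_).1
    obtain ⟨d, hd, hd'⟩ := h c hac hcb
    have hEd : E c (min d b) := ⟨min_le_right _ _, lt_min hd hcb, fun t h1 h2 =>
      hd' t h1 (h2.trans_le (min_le_left _ _))⟩
    obtain ⟨r, hr⟩ := exists_lub (S := S) (P := E c) (hE.right c) ⟨_, hEd⟩ ⟨b, fun t ht => ht.1⟩
    refine ⟨r, ⟨hr.2 fun t ht => ht.1, hEd.2.1.trans_le (hr.1 hEd), fun t h1 h2 => ?_⟩,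
      fun e he => hr.1 he⟩
    obtain ⟨e, he, h3, -⟩ := hr.exists_between h2
    exact he.2.2 t h1 h3
  by_contra! H
  let B : N → Prop := fun c => (a < c ∧ c < b) ∧ ∀ y, a < y → y < c → ρ y < ρ c
  have hB : S.Dfn B := by dsimp only [B]; fun_prop
  by_cases hinf : Inf B
  · obtain ⟨p, q, hpq, hI⟩ := hinf.exists_Ioo hB
    obtain ⟨c, hpc, hcq⟩ := exists_between hpq
    obtain ⟨⟨hac, hcb⟩, -⟩ := hI c hpc hcq
    obtain ⟨hρb, hcρ, -⟩ := hρs c hac hcb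
    obtain ⟨x, hcx, hx⟩ := exists_between (lt_min hcq hcρ)
    obtain ⟨hxq, hxρ⟩ := lt_min_iff.1 hx
    refine H x (hac.trans hcx) (hxρ.trans_le hρb) (inf_of_Ioo hcx fun t h1 h2 => ?_)
    obtain ⟨⟨hat, htb⟩, ht⟩ := hI t (hpc.trans h1) (h2.trans hxq)
    exact ⟨⟨hat, h2⟩, (hρs t hat htb).2.2 x h2 (hxρ.trans (ht c hac h1))⟩
  · obtain ⟨a', ha', hfree⟩ := exists_right_free (not_inf.1 hinf) a
    obtain ⟨c, hac, hc⟩ := exists_between (lt_min ha' hab)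
    obtain ⟨hca', hcb⟩ := lt_min_iff.1 hc
    have hcB : ¬ B c := fun h => not_le.2 hca' (hfree c h hac)
    have hex : ∃ y, (a < y ∧ y < c) ∧ ρ c ≤ ρ y := by
      by_contra! hcon
      exact hcB ⟨⟨hac, hcb⟩, fun y h1 h2 => hcon y ⟨h1, h2⟩⟩
    obtain ⟨e, ⟨⟨hae, hec⟩, hρe⟩, hmin⟩ := Inf.exists_least
      (fun hi => H c hac hcb (hi.mono fun t ht => ⟨ht.1, (hρs t ht.1.1 (ht.1.2.trans hcb)).2.2 c
        ht.1.2 ((hρs c hac hcb).2.1.trans_le ht.2)⟩)) hex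
    refine not_le.2 (hec.trans hca') (hfree e ⟨⟨hae, hec.trans hcb⟩, fun y h1 h2 => ?_⟩ hae)
    by_contra! hcon
    exact not_le.2 h2 (hmin ⟨⟨h1, h2.trans hec⟩, hρe.trans hcon⟩)

lemma exists_uniform_bound {T U : N → Prop} {Q : N → N → Prop} 
    (hQ : S.Dfn (fun p : N × N => Q p.1 p.2)) (hT : S.Dfn T) (hinf : Inf T)
    (hU1 : ∀ d e, U d → d ≤ e → U e) (hU2 : ∀ d, U d → ∃ e, e < d ∧ U e)
    (hQU : ∀ t d, T t → Q t d → U d)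
    (hQd : ∀ t d e, T t → Q t d → U e → e < d → Q t e) (hex : ∀ t, T t → ∃ d, Q t d) :
    ∃ d, Inf (fun t => T t ∧ Q t d) := by
  obtain ⟨t₁, ht₁⟩ := hinf.exists
  obtain ⟨d₁, hd₁⟩ := hex t₁ ht₁
  have hUd₁ := hQU t₁ d₁ ht₁ hd₁
  obtain ⟨δ, hδ, hδs⟩ := Struc.Dfn.exists_choice (S := S)
    (Q := fun t r => (∀ d, Q t d ∧ d ≤ d₁ → d ≤ r) ∧ ∀ z, (∀ d, Q t d ∧ d ≤ d₁ → d ≤ z) → r ≤ z)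
    (by fun_prop)
    (fun x y y' h h' => le_antisymm (h.2 _ h'.1) (h'.2 _ h.1))
  have hne : ∀ t, T t → ∃ d, Q t d ∧ d ≤ d₁ := by
    intro t ht
    obtain ⟨d, hd⟩ := hex t ht
    rcases le_or_gt d d₁ with h | h
    · exact ⟨d, hd, h⟩
    · exact ⟨d₁, hQd t d d₁ ht hd hUd₁ h, le_rfl⟩
  have hlub : ∀ t, T t → IsLUB {d | Q t d ∧ d ≤ d₁} (δ t) := by
    intro t ht
    obtain ⟨r, hr⟩ := exists_lub (S := S) (P := fun d => Q t d ∧ d ≤ d₁) (by fun_prop) (hne t ht)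
      ⟨d₁, fun d hd => hd.2⟩
    obtain ⟨h1, h2⟩ := hδs t ⟨r, fun d hd => hr.1 hd, fun z hz => hr.2 fun d hd => hz d hd⟩
    exact ⟨fun d hd => h1 d hd, fun z hz => h2 z fun d hd => hz hd⟩
  have hUδ : ∀ t, T t → U (δ t) := fun t ht => by
    obtain ⟨d, hd⟩ := hne t ht
    exact hU1 d _ (hQU t d ht hd.1) ((hlub t ht).1 hd)
  have hlt : ∀ t e, T t → U e → e < δ t → Q t e := fun t e ht he hlt => by
    obtain ⟨d, hd, h1, -⟩ := (hlub t ht).exists_between hlt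
    exact hQd t d e ht hd.1 he h1
  rcases hinf.fibre_or_image δ with ⟨c, hc⟩ | him
  · obtain ⟨t, ht, rfl⟩ := hc.exists
    obtain ⟨e, he, hUe⟩ := hU2 _ (hUδ t ht)
    exact ⟨e, hc.mono fun s hs => ⟨hs.1, hlt s e hs.1 hUe (hs.2 ▸ he)⟩⟩
  · obtain ⟨p, q, hpq, hI⟩ := him.exists_Ioo (S := S) (by fun_prop)
    obtain ⟨e, h1, h2⟩ := exists_between hpq
    refine ⟨e, fun hfin => ?_⟩
    refine Set.Ioo_infinite h2 ((hfin.image δ).subset ?_)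
    rintro c ⟨hc1, hc2⟩
    obtain ⟨t, ht, rfl⟩ := hI c (h1.trans hc1) hc2
    obtain ⟨s, hs, rfl⟩ := hI e h1 h2
    exact ⟨t, ⟨ht, hlt t _ ht (hUδ s hs) hc1⟩, rfl⟩

lemma exists_inf_of_inf_inf {R : N → N → Prop} (hR : S.Dfn (fun p : N × N => R p.1 p.2))
    (h : Inf (fun t => Inf (fun c => R t c))) : ∃ c, Inf (fun t => R t c) := by
  have h' : Inf (fun t => (∃ d, ∀ s, s < d → R t s) ∨
      (Inf (fun c => R t c) ∧ ¬ ∃ d, ∀ s, s < d → R t s)) := h.mono fun t ht => by tauto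
  rcases inf_or h' with h | hT
  · obtain ⟨d, hd⟩ := exists_uniform_bound (S := S) (U := fun _ => True)
      (Q := fun t d => ∀ s, s < d → R t s) (by fun_prop) (by fun_prop) h (by simp)
      (fun d _ => (exists_lt d).imp fun _ h => ⟨h, trivial⟩) (by simp)
      (fun t d e _ h _ hed s hs => h s (hs.trans hed)) (fun t ht => ht)
    obtain ⟨c, hc⟩ := exists_lt d
    exact ⟨c, hd.mono fun t ht => ht.2 c hc⟩
  · set T : N → Prop := fun t => Inf (fun c => R t c) ∧ ¬ ∃ d, ∀ s, s < d → R t s with hTdef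
    have hTd : S.Dfn T := by rw [hTdef]; fun_prop
    let L : N → N → Prop := fun t l => ∃ d, l < d ∧ ∀ s, l < s → s < d → R t s
    have hLd : S.Dfn (fun p : N × N => L p.1 p.2) := by dsimp only [L]; fun_prop
    obtain ⟨lam, hlam, hlams⟩ := Struc.Dfn.exists_choice_min hLd
    replace hlams : ∀ t, T t → L t (lam t) := by
      rintro t ⟨ht1, ht2⟩
      apply hlams
      obtain ⟨a, b, hab, hI⟩ := ht1.exists_Ioo (S := S) (by fun_prop)
      obtain ⟨d, hd | hd⟩ := bot_germ (S := S) (P := fun s => R t s) (by fun_prop)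
      · exact absurd ⟨d, hd⟩ ht2
      obtain ⟨l, hl⟩ := exists_glb (S := S) (hLd.right t) ⟨a, b, hab, hI⟩ ⟨d, by
        rintro l ⟨d', h1, h2⟩
        by_contra! hcon
        obtain ⟨s, h3, h4⟩ := exists_between (lt_min h1 hcon)
        exact hd s (h4.trans_le (min_le_right _ _)) (h2 s h3 (h4.trans_le (min_le_left _ _)))⟩
      refine ⟨l, ?_, hl.1⟩
      obtain ⟨e, he, h1 | h1⟩ := right_germ (S := S) (P := fun s => R t s) (by fun_prop) l
      · exact ⟨e, he, h1⟩
      obtain ⟨l', ⟨d', h2, h3⟩, h4, h5⟩ := hl.exists_between he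
      obtain ⟨s, h6, h7⟩ := exists_between (lt_min h2 h5)
      exact absurd (h3 s h6 (h7.trans_le (min_le_left _ _)))
        (h1 s (h4.trans_lt h6) (h7.trans_le (min_le_right _ _)))
    by_cases hfib : ∃ l, Inf (fun t => T t ∧ lam t = l)
    · obtain ⟨l, hl⟩ := hfib
      obtain ⟨d, hd⟩ := exists_uniform_bound (S := S) (U := fun e => l < e)
        (Q := fun t d => l < d ∧ ∀ s, l < s → s < d → R t s) (by fun_prop) (by fun_prop) hl
        (fun d e h h' => h.trans_le h')
        (fun d hd => (exists_between hd).imp fun _ h => ⟨h.2, h.1⟩) (fun t d _ h => h.1)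
        (fun t d e _ h h' hed => ⟨h', fun s h1 hs => h.2 s h1 (hs.trans hed)⟩)
        (fun t ht => by have := hlams t ht.1; rw [ht.2] at this; exact this)
      obtain ⟨-, -, hld, -⟩ := hd.exists
      obtain ⟨c, hc1, hc2⟩ := exists_between hld
      exact ⟨c, hd.mono fun t ht => ht.2.2 c hc1 hc2⟩
    · rcases Inf.fibre_or_image hT lam with h | him
      · exact absurd h hfib
      obtain ⟨a, b, hab, hI⟩ := him.exists_Ioo (S := S) (by fun_prop)
      obtain ⟨θ, hθ, hθs⟩ := Struc.Dfn.exists_choice_min (S := S) (Q := fun c t => T t ∧ lam t = c)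
        (by fun_prop)
      replace hθs : ∀ c, a < c → c < b → T (θ c) ∧ lam (θ c) = c := fun c h1 h2 =>
        hθs c (Inf.exists_least (fun h => hfib ⟨c, h⟩) (hI c h1 h2))
      obtain ⟨x, hax, hxb, hx⟩ := exists_inf_of_right_germ (S := S) (Ψ := fun c x => R (θ c) x)
        (by fun_prop) hab fun c h1 h2 => by
          have := hlams _ (hθs c h1 h2).1
          rw [(hθs c h1 h2).2] at this
          exact this
      refine ⟨x, hx.image (f := θ) (fun t ht => ht.2) fun t s ht hs e => ?_⟩
      rw [← (hθs t ht.1.1 (ht.1.2.trans hxb)).2, e, (hθs s hs.1.1 (hs.1.2.trans hxb)).2]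

/-- The quantifiers saying that there are infinitely many elements commute. -/
lemma inf_comm_imp {R : N → N → Prop} (hR : S.Dfn (fun p : N × N => R p.1 p.2))
    (h : Inf (fun t => Inf (fun c => R t c))) : Inf (fun c => Inf (fun t => R t c)) := by
  by_contra hfin
  obtain ⟨c, hc⟩ := exists_inf_of_inf_inf (S := S)
    (R := fun t c => R t c ∧ ¬ Inf (fun s => R s c)) (by fun_prop)
    (h.mono fun t ht => by
      refine (Set.Infinite.sdiff ht (not_inf.1 hfin)).mono fun c hc => ⟨hc.1, hc.2⟩)
  obtain ⟨t, ht⟩ := hc.exists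
  exact ht.2 (hc.mono fun t ht => ht.1)

end Commutation

section LargeSets

variable {N : Type u} [LinearOrder N] [DenselyOrdered N] [NoMinOrder N] [NoMaxOrder N] [Nonempty N]
  {S : Struc N} {Γ Δ E : Type u} [Ctx N Γ] [Ctx N Δ] [Ctx N E]

/-- Iterated infinity quantifier: `A` is a large subset of `N^k`. -/
def Big : ∀ k : ℕ, ((Fin k → N) → Prop) → Prop
  | 0, A => A Fin.elim0
  | k + 1, A => Inf (fun t => Big k (fun w => A (Fin.cons t w)))

lemma Big.mono {k : ℕ} {A B : (Fin k → N) → Prop} (h : Big k A) (hAB : ∀ w, A w → B w) :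
    Big k B := by
  induction k with
  | zero => exact hAB _ h
  | succ k ih => exact Inf.mono h fun t ht => ih ht fun w => hAB _

lemma Big.exists {k : ℕ} {A : (Fin k → N) → Prop} (h : Big k A) : ∃ w, A w := by
  induction k with
  | zero => exact ⟨_, h⟩
  | succ k ih =>
    obtain ⟨t, ht⟩ := Inf.exists h
    exact (ih ht).imp' _ fun w => id

@[fun_prop]
lemma Struc.Dfn.big {k : ℕ} {P : Γ → (Fin k → N) → Prop}
    (hP : S.Dfn (fun p : Γ × (Fin k → N) => P p.1 p.2)) :
    S.Dfn (fun x => Big k (fun w => P x w)) := by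
  induction k generalizing Γ with
  | zero =>
    unfold Big
    fun_prop
  | succ k ih =>
    unfold Big
    exact Struc.Dfn.inf (ih (P := fun (p : Γ × N) w => P p.1 (Fin.cons p.2 w)) (by fun_prop))

lemma big_or {k : ℕ} {A B : (Fin k → N) → Prop} (h : Big k (fun w => A w ∨ B w)) :
    Big k A ∨ Big k B := by
  induction k with
  | zero => exact h
  | succ k ih =>
    exact inf_or (Inf.mono h fun t ht => ih ht)

lemma big_finite_ex {k : ℕ} {ι : Type*} [Finite ι] {A : ι → (Fin k → N) → Prop}
    (h : Big k (fun w => ∃ i, A i w)) : ∃ i, Big k (A i) := by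
  classical
  cases nonempty_fintype ι
  have key : ∀ s : Finset ι, Big k (fun w => ∃ i ∈ s, A i w) → ∃ i ∈ s, Big k (A i) := by
    intro s
    induction s using Finset.induction_on with
    | empty =>
      intro h
      obtain ⟨w, i, hi, -⟩ := h.exists
      simp at hi
    | insert a s _ ih =>
      intro h
      rcases big_or (h.mono (B := fun w => A a w ∨ ∃ i ∈ s, A i w) (by simp)) with h | h
      · exact ⟨a, by simp, h⟩
      · obtain ⟨i, hi, h⟩ := ih h
        exact ⟨i, by simp [hi], h⟩
  obtain ⟨i, -, h⟩ := key Finset.univ (h.mono (by simp))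
  exact ⟨i, h⟩

lemma inf_finite_ex {ι : Type*} [Finite ι] {A : ι → N → Prop}
    (h : Inf (fun t => ∃ i, A i t)) : ∃ i, Inf (A i) := by
  by_contra! hc
  refine h ((Set.finite_iUnion fun i => not_inf.1 (hc i)).subset ?_)
  rintro t ⟨i, hi⟩
  exact Set.mem_iUnion.2 ⟨i, hi⟩

lemma inf_inf_comm {R : N → N → Prop} (hR : S.Dfn (fun p : N × N => R p.1 p.2)) :
    Inf (fun t => Inf (fun c => R t c)) ↔ Inf (fun c => Inf (fun t => R t c)) :=
  ⟨inf_comm_imp hR, inf_comm_imp (R := fun c t => R t c) (S := S) (by fun_prop)⟩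

lemma inf_congr {P Q : N → Prop} (h : ∀ t, P t ↔ Q t) : Inf P ↔ Inf Q := by
  rw [show P = Q from funext fun t => propext (h t)]

lemma inf_big_comm {k : ℕ} {R : N → (Fin k → N) → Prop}
    (hR : S.Dfn (fun p : N × (Fin k → N) => R p.1 p.2)) :
    Inf (fun t => Big k (fun w => R t w)) ↔ Big k (fun w => Inf (fun t => R t w)) := by
  induction k with
  | zero => rfl
  | succ k ih =>
    refine (inf_inf_comm (R := fun t s => Big k (fun w => R t (Fin.cons s w))) (S := S)
      (by fun_prop)).trans ?_
    exact inf_congr fun s => ih (by fun_prop)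

/-- The open box with corners `a` and `b`. -/
def InBox {k : ℕ} (a b w : Fin k → N) : Prop := ∀ i, a i < w i ∧ w i < b i

lemma big_box {k : ℕ} {a b : Fin k → N} (hab : ∀ i, a i < b i) : Big k (InBox a b) := by
  induction k with
  | zero => exact fun i => i.elim0
  | succ k ih =>
    refine inf_of_Ioo (hab 0) fun t h1 h2 => (ih (a := Fin.tail a) (b := Fin.tail b)
      fun i => hab i.succ).mono fun w hw i => ?_
    induction i using Fin.cases with
    | zero => exact ⟨h1, h2⟩
    | succ i => exact hw i

lemma Big.exists_box {k : ℕ} {A : (Fin k → N) → Prop} (h : Big k A) (hA : S.Dfn A) :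
    ∃ a b : Fin k → N, (∀ i, a i < b i) ∧ ∀ w, InBox a b w → A w := by
  induction k with
  | zero =>
    exact ⟨Fin.elim0, Fin.elim0, fun i => i.elim0, fun w _ => (Subsingleton.elim Fin.elim0 w) ▸ h⟩
  | succ k ih =>
    have h1 : Big k (fun w => Inf (fun p => Inf (fun q =>
        p < q ∧ ∀ t, p < t → t < q → A (Fin.cons t w)))) := by
      refine ((inf_big_comm (S := S) (by fun_prop)).1 h).mono fun w hw => ?_
      obtain ⟨p, q, hpq, hI⟩ := hw.exists_Ioo (S := S) (by fun_prop)
      exact inf_of_Ioo hpq fun p' h1 h2 => inf_of_Ioo h2 fun q' h3 h4 =>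
        ⟨h3, fun t h5 h6 => hI t (h1.trans h5) (h6.trans h4)⟩
    obtain ⟨p, hp⟩ := ((inf_big_comm (S := S) (by fun_prop)).2 h1).exists
    obtain ⟨q, hq⟩ := ((inf_big_comm (S := S) (by fun_prop)).2 hp).exists
    obtain ⟨a, b, hab, hbox⟩ := ih hq (by fun_prop)
    have hpq : p < q := by
      obtain ⟨w, hw⟩ := hq.exists
      exact hw.1
    refine ⟨Fin.cons p a, Fin.cons q b, fun i => ?_, fun w hw => ?_⟩
    · induction i using Fin.cases with
      | zero => exact hpq
      | succ i => exact hab i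
    · have := (hbox (Fin.tail w) fun i => hw i.succ).2 (w 0) (hw 0).1 (hw 0).2
      rwa [Fin.cons_self_tail] at this

lemma exists_inBox {k : ℕ} {a b : Fin k → N} (hab : ∀ i, a i < b i) : ∃ w, InBox a b w :=
  (big_box hab).exists

/-- Generic definable choice of an element of `N`. -/
lemma generic_choice_one {k : ℕ} {R : (Fin k → N) → N → Prop}
    (hR : S.Dfn (fun p : (Fin k → N) × N => R p.1 p.2)) (h : Big k (fun w => ∃ c, R w c)) :
    ∃ c : (Fin k → N) → N, S.Dfn c ∧ Big k (fun w => R w (c w)) := by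
  rcases big_or (h.mono (B := fun w => Inf (fun c => R w c) ∨
      (¬ Inf (fun c => R w c)) ∧ ∃ c, R w c) fun w hw => by tauto) with h | h
  · obtain ⟨c, hc⟩ := ((inf_big_comm (S := S) (R := fun c w => R w c) (by fun_prop)).2 h).exists
    exact ⟨fun _ => c, by fun_prop, hc⟩
  · obtain ⟨c, hc, hcs⟩ := Struc.Dfn.exists_choice_min hR
    exact ⟨c, hc, h.mono fun w hw => hcs w (Inf.exists_least hw.1 hw.2)⟩

/-- Generic definable choice of a tuple. -/
lemma generic_choice {k n : ℕ} {R : (Fin k → N) → (Fin n → N) → Prop}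
    (hR : S.Dfn (fun p : (Fin k → N) × (Fin n → N) => R p.1 p.2))
    (h : Big k (fun w => ∃ c, R w c)) :
    ∃ c : (Fin k → N) → (Fin n → N), S.Dfn c ∧ Big k (fun w => R w (c w)) := by
  induction n with
  | zero =>
    exact ⟨fun _ => Fin.elim0, by fun_prop, h.mono fun w ⟨c, hc⟩ =>
      (Subsingleton.elim c Fin.elim0) ▸ hc⟩
  | succ n ih =>
    obtain ⟨t, ht, h1⟩ := generic_choice_one (S := S) (R := fun w t => ∃ v, R w (Fin.cons t v))
      (by fun_prop) (h.mono fun w ⟨c, hc⟩ => ⟨c 0, Fin.tail c, by rwa [Fin.cons_self_tail]⟩)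
    obtain ⟨v, hv, h2⟩ := ih (R := fun w v => R w (Fin.cons (t w) v)) (by fun_prop) h1
    exact ⟨fun w => Fin.cons (t w) (v w), by fun_prop, h2⟩

lemma exists_inf_coord {m : ℕ} {A : N → Prop} (hA : Inf A) {f : N → Fin m → N}
    (hf : ∀ t s, A t → A s → f t = f s → t = s) :
    ∃ i, Inf (fun s => ∃ t, A t ∧ f t i = s) := by
  by_contra! hc
  refine hA (Set.Finite.of_finite_image (f := f) ?_ fun t ht s hs e => hf t s ht hs e)
  refine (Set.Finite.pi' fun i => not_inf.1 (hc i)).subset ?_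
  rintro _ ⟨t, ht, rfl⟩ i
  exact ⟨t, ht, rfl⟩

/-- The image of a large set under a definable injection has a large coordinate projection. -/
lemma Big.exists_big_proj {k m : ℕ} {A : (Fin k → N) → Prop} {f : (Fin k → N) → (Fin m → N)}
    (h : Big k A) (hA : S.Dfn A) (hf : S.Dfn f)
    (hinj : ∀ w w', A w → A w' → f w = f w' → w = w') :
    ∃ p : Fin k → Fin m, Big k (fun u => ∃ w, A w ∧ f w ∘ p = u) := by
  induction k with
  | zero => exact ⟨Fin.elim0, Fin.elim0, h, Subsingleton.elim _ _⟩
  | succ k ih =>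
    have h1 : Big k (fun w => ∃ i, Inf (fun s => ∃ t, A (Fin.cons t w) ∧ f (Fin.cons t w) i = s)) :=
      ((inf_big_comm (S := S) (by fun_prop)).1 h).mono fun w hw =>
        exists_inf_coord hw fun t s ht hs e => Fin.cons_injective2 (hinj _ _ ht hs e) |>.1
    obtain ⟨i, hi⟩ := big_finite_ex h1
    have h2 : Big (k + 1) (fun z => ∃ t, A (Fin.cons t (Fin.tail z)) ∧
        f (Fin.cons t (Fin.tail z)) i = z 0) := (inf_big_comm (S := S) (by fun_prop)).2 hi
    obtain ⟨τ, hτ, h3⟩ := generic_choice_one (S := S) (by fun_prop) h2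
    have h4 : Inf (fun s => ∃ p : Fin k → Fin m, Big k (fun u => ∃ w,
        (A (Fin.cons (τ (Fin.cons s w)) w) ∧ f (Fin.cons (τ (Fin.cons s w)) w) i = s) ∧
          f (Fin.cons (τ (Fin.cons s w)) w) ∘ p = u)) :=
      Inf.mono h3 fun s hs => ih hs (by fun_prop)
        (f := fun w => f (Fin.cons (τ (Fin.cons s w)) w)) (by fun_prop)
        fun w w' hw hw' e => Fin.cons_injective2 (hinj _ _ hw.1 hw'.1 e) |>.2
    obtain ⟨p, hp⟩ := inf_finite_ex h4
    refine ⟨Fin.cons i p, hp.mono fun s hs => hs.mono ?_⟩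
    rintro u ⟨w, ⟨hw1, hw2⟩, hw3⟩
    refine ⟨_, hw1, funext fun l => ?_⟩
    induction l using Fin.cases with
    | zero => exact hw2
    | succ l => exact congrFun hw3 l

end LargeSets

section Dimension

variable {N : Type u} [LinearOrder N] [DenselyOrdered N] [NoMinOrder N] [NoMaxOrder N] [Nonempty N]
  [TopologicalSpace N] [OrderTopology N] {S : Struc N} 

lemma big_iff_interior {k : ℕ} {A : Set (Fin k → N)} (hA : S.Def k A) :
    (interior A).Nonempty ↔ Big k (fun w => w ∈ A) := by
  constructor
  · rintro ⟨x, hx⟩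
    rw [mem_interior_iff_mem_nhds, nhds_pi, Filter.mem_pi] at hx
    obtain ⟨I, -, t, ht, hsub⟩ := hx
    have : ∀ i, ∃ a b, x i ∈ Ioo a b ∧ Ioo a b ⊆ t i := fun i =>
      mem_nhds_iff_exists_Ioo_subset.1 (ht i)
    choose a b hx' hab using this
    exact (big_box fun i => (hx' i).1.trans (hx' i).2).mono fun w hw =>
      hsub fun i _ => hab i (hw i)
  · intro h
    obtain ⟨a, b, hab, hbox⟩ := h.exists_box (dfn_mem_iff.2 hA)
    obtain ⟨w, hw⟩ := exists_inBox hab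
    have ho : IsOpen (Set.pi univ fun i => Ioo (a i) (b i)) :=
      isOpen_set_pi Set.finite_univ fun i _ => isOpen_Ioo
    exact ⟨w, mem_interior.2 ⟨_, fun v hv => hbox v fun i => Set.mem_pi.1 hv i trivial, ho,
      Set.mem_pi.2 fun i _ => hw i⟩⟩

lemma def_image_proj {k m : ℕ} {A : Set (Fin m → N)} (hA : S.Def m A) (p : Fin k → Fin m) :
    S.Def k ((fun x : Fin m → N => x ∘ p) '' A) := by
  rw [← dfn_mem_iff] at hA ⊢
  have : S.Dfn (fun u => ∃ w : Fin m → N, w ∈ A ∧ (fun i => w (p i)) = u) := by fun_prop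
  exact this

lemma injective_of_big_proj {k m : ℕ} {A : Set (Fin m → N)} (hA : S.Def m A) (p : Fin k → Fin m)
    (h : Big k (fun u => ∃ w ∈ A, w ∘ p = u)) : Function.Injective p := by
  intro i j hij
  by_contra hne
  obtain ⟨a, b, hab, hbox⟩ := h.exists_box (dfn_mem_iff.2 (def_image_proj hA p))
  obtain ⟨w, hw⟩ := exists_inBox hab
  obtain ⟨c, hc1, hc2⟩ := exists_between (hw i).1
  obtain ⟨x, -, hx⟩ := hbox w hw
  obtain ⟨y, -, hy⟩ := hbox (Function.update w i c) fun l => by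
    by_cases hl : l = i
    · subst hl
      simpa using ⟨hc1, hc2.trans (hw l).2⟩
    · simpa [hl] using hw l
  have e1 : w i = w j := by rw [← hx]; simp [hij]
  have e2 : c = w j := by
    have h1 := congrFun hy i
    have h2 := congrFun hy j
    simp only [Function.comp_apply, Function.update_self, hij,
      Function.update_of_ne (Ne.symm hne)] at h1 h2
    exact h1.symm.trans h2
  exact hc2.ne (e2.trans e1.symm)

lemma odim_bddAbove {m : ℕ} (A : Set (Fin m → N)) :
    BddAbove {k | ∃ p : Fin k → Fin m, Function.Injective p ∧
      (interior ((fun x : Fin m → N => x ∘ p) '' A)).Nonempty} := by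
  refine ⟨m, ?_⟩
  rintro k ⟨p, hp, -⟩
  simpa using Fintype.card_le_of_injective p hp

lemma le_odim {k m : ℕ} {A : Set (Fin m → N)} (hA : S.Def m A) (p : Fin k → Fin m)
    (h : Big k (fun u => ∃ w ∈ A, w ∘ p = u)) : k ≤ odim A :=
  le_csSup (odim_bddAbove A)
    ⟨p, injective_of_big_proj hA p h, (big_iff_interior (def_image_proj hA p)).2 h⟩

lemma exists_big_proj_odim {m : ℕ} {A : Set (Fin m → N)} (hA : S.Def m A) (hne : A.Nonempty) :
    ∃ p : Fin (odim A) → Fin m, Big (odim A) (fun u => ∃ w ∈ A, w ∘ p = u) := by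
  obtain ⟨p, -, hp⟩ := Nat.sSup_mem (s := {k | ∃ p : Fin k → Fin m, Function.Injective p ∧
      (interior ((fun x : Fin m → N => x ∘ p) '' A)).Nonempty}) ⟨0, Fin.elim0,
      fun i => i.elim0, by
        obtain ⟨x, hx⟩ := hne
        refine (big_iff_interior (def_image_proj hA _)).2 ?_
        exact ⟨x, hx, Subsingleton.elim _ _⟩⟩ (odim_bddAbove A)
  exact ⟨p, (big_iff_interior (def_image_proj hA p)).1 hp⟩

end Dimension

section Continuity

variable {N : Type u} [LinearOrder N] [DenselyOrdered N] [NoMinOrder N] [NoMaxOrder N] [Nonempty N]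
  [TopologicalSpace N] [OrderTopology N] {S : Struc N}

lemma not_inf_inf_closure {Q : N → N → Prop} (hQ : S.Dfn (fun p : N × N => Q p.1 p.2)) :
    ¬ Inf (fun t => Inf (fun c => ¬ Q t c ∧ ∀ a b, a < t → t < b → ∃ s, a < s ∧ s < b ∧ Q s c)) := by
  intro h
  obtain ⟨c, hc⟩ := exists_inf_of_inf_inf (S := S) (by fun_prop) h
  obtain ⟨p, q, hpq, hI⟩ := hc.exists_Ioo (S := S) (by fun_prop)
  obtain ⟨t, h1, h2⟩ := exists_between hpq
  obtain ⟨s, h3, h4, h5⟩ := (hI t h1 h2).2 p q h1 h2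
  exact (hI s h3 h4).1 h5

lemma frequently_nhds_Ioo {P : N → Prop} {t : N} (h : ∃ᶠ s in 𝓝 t, P s) {a b : N} (ha : a < t)
    (hb : t < b) : ∃ s, a < s ∧ s < b ∧ P s := by
  obtain ⟨s, hs, h1, h2⟩ := (h.and_eventually (Ioo_mem_nhds ha hb)).exists
  exact ⟨s, h1, h2, hs⟩

/-- Definable functions in one variable are continuous outside a finite set. -/
lemma not_inf_not_continuousAt {f : N → N} (hf : S.Dfn f) :
    ¬ Inf (fun t => ¬ ContinuousAt f t) := by
  intro h
  have key : ∀ t, ¬ ContinuousAt f t →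
      Inf (fun c => ¬ f t ≤ c ∧ ∀ a b, a < t → t < b → ∃ s, a < s ∧ s < b ∧ f s ≤ c) ∨
      Inf (fun c => ¬ c ≤ f t ∧ ∀ a b, a < t → t < b → ∃ s, a < s ∧ s < b ∧ c ≤ f s) := by
    intro t ht
    rw [ContinuousAt, tendsto_order, not_and_or] at ht
    rcases ht with ht | ht
    · push Not at ht
      obtain ⟨e, he, hfr⟩ := ht
      left
      exact inf_of_Ioo he fun c h1 h2 => ⟨not_le.2 h2, fun a b ha hb => frequently_nhds_Ioo
        (hfr.mono fun s hs => hs.trans h1.le) ha hb⟩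
    · push Not at ht
      obtain ⟨e, he, hfr⟩ := ht
      right
      exact inf_of_Ioo he fun c h1 h2 => ⟨not_le.2 h1, fun a b ha hb => frequently_nhds_Ioo
        (hfr.mono fun s hs => h2.le.trans hs) ha hb⟩
  rcases inf_or (h.mono key) with h | h
  · exact not_inf_inf_closure (S := S) (Q := fun t c => f t ≤ c) (by fun_prop) h
  · exact not_inf_inf_closure (S := S) (Q := fun t c => c ≤ f t) (by fun_prop) h

lemma not_inf_not_continuousAt_pi {m : ℕ} {f : N → Fin m → N} (hf : S.Dfn f) :
    ¬ Inf (fun t => ¬ ContinuousAt f t) := by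
  intro h
  obtain ⟨i, hi⟩ := inf_finite_ex (h.mono (Q := fun t => ∃ i, ¬ ContinuousAt (fun t => f t i) t)
    fun t ht => by simpa [continuousAt_pi] using ht)
  exact not_inf_not_continuousAt (S := S) (f := fun t => f t i) (by fun_prop) hi

end Continuity

section Choice

variable {N : Type u} [LinearOrder N] [DenselyOrdered N] [NoMinOrder N] [NoMaxOrder N] [Nonempty N]
  {S : Struc N} {Γ : Type u} [Ctx N Γ]

@[fun_prop]
lemma Struc.Dfn.isGLB {P : Γ → N → Prop} {c : Γ → N} (hP : S.Dfn (fun p : Γ × N => P p.1 p.2))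
    (hc : S.Dfn c) : S.Dfn (fun x => IsGLB {t | P x t} (c x)) := by
  have : S.Dfn (fun x => (∀ t, P x t → c x ≤ t) ∧ ∀ b, (∀ t, P x t → b ≤ t) → b ≤ c x) := by
    fun_prop
  exact this

@[fun_prop]
lemma Struc.Dfn.isLUB {P : Γ → N → Prop} {c : Γ → N} (hP : S.Dfn (fun p : Γ × N => P p.1 p.2))
    (hc : S.Dfn c) : S.Dfn (fun x => IsLUB {t | P x t} (c x)) := by
  have : S.Dfn (fun x => (∀ t, P x t → t ≤ c x) ∧ ∀ b, (∀ t, P x t → t ≤ b) → c x ≤ b) := by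
    fun_prop
  exact this

/-- There is a definable way of picking a point in each subinterval of `(p, q)`. -/
def Choosable (S : Struc N) (p q : N) : Prop :=
  ∃ mid : N × N → N, S.Dfn mid ∧ ∀ a b, p ≤ a → a < b → b ≤ q → a < mid (a, b) ∧ mid (a, b) < b

lemma Choosable.choice {p q : N} (h : Choosable S p q) {R : Γ → N → Prop}
    (hR : S.Dfn (fun z : Γ × N => R z.1 z.2)) :
    ∃ c : Γ → N, S.Dfn c ∧ ∀ x, (∃ t, (p < t ∧ t < q) ∧ R x t) →
      (p < c x ∧ c x < q) ∧ R x (c x) := by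
  obtain ⟨mid, hmid, hm⟩ := h
  let P : Γ → N → Prop := fun x t => (p < t ∧ t < q) ∧ R x t
  have hP : S.Dfn (fun z : Γ × N => P z.1 z.2) := by dsimp only [P]; fun_prop
  obtain ⟨c, hc, hcs⟩ := Struc.Dfn.exists_choice_min hP
  obtain ⟨a, ha, has⟩ := Struc.Dfn.exists_choice (S := S) (Q := fun x a => IsGLB {t | P x t} a)
    (by fun_prop) fun _ _ _ h1 h2 => h1.unique h2
  obtain ⟨b, hb, hbs⟩ := Struc.Dfn.exists_choice (S := S)
    (Q := fun x b => IsLUB {b | b ≤ q ∧ a x < b ∧ ∀ t, a x < t → t < b → P x t} b)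
    (by fun_prop) fun _ _ _ h1 h2 => h1.unique h2
  have hPc : S.Dfn (fun x => P x (c x)) := by dsimp only [P]; fun_prop
  refine ⟨_, hPc.ite hc (hmid.comp (ha.prodMk hb)), fun x hx => ?_⟩
  change P x _
  split_ifs with hmin
  · exact hmin
  have hnl : ¬ ∃ t, IsLeast {t | P x t} t := fun hl => hmin (hcs x hl)
  have hax := has x (exists_glb (hP.right x) hx ⟨p, fun t ht => ht.1.1.le⟩)
  have hpa : p ≤ a x := hax.2 fun t ht => ht.1.1.le
  have haP : ¬ P x (a x) := fun h => hnl ⟨_, h, hax.1⟩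
  obtain ⟨t₀, ht₀⟩ := hx
  have haq : a x < q := (hax.1 ht₀).trans_lt ht₀.1.2
  obtain ⟨d, hd, hd'⟩ := right_germ (hP.right x) (a x)
  have hgerm : ∀ t, a x < t → t < d → P x t := by
    refine hd'.resolve_right fun hn => ?_
    refine (hax.2 fun t ht => ?_ : d ≤ a x).not_gt hd
    by_contra! hlt
    exact hn t (lt_of_le_of_ne (hax.1 ht) fun e => haP (e ▸ ht)) hlt ht
  have hne : min d q ≤ q ∧ a x < min d q ∧ ∀ t, a x < t → t < min d q → P x t :=
    ⟨min_le_right _ _, lt_min hd haq, fun t h1 h2 => hgerm t h1 (h2.trans_le (min_le_left _ _))⟩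
  have hbx := hbs x (exists_lub (S := S)
    (P := fun b => b ≤ q ∧ a x < b ∧ ∀ t, a x < t → t < b → P x t)
    (Struc.Dfn.right (P := fun x b => b ≤ q ∧ a x < b ∧ ∀ t, a x < t → t < b → P x t)
      (by fun_prop) x) ⟨_, hne⟩ ⟨q, fun t ht => ht.1⟩)
  obtain ⟨h1, h2⟩ := hm (a x) (b x) hpa (hne.2.1.trans_le (hbx.1 hne)) (hbx.2 fun t ht => ht.1)
  obtain ⟨b', hb', hlt⟩ := (lt_isLUB_iff hbx).1 h2
  exact hb'.2.2 _ h1 hlt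

@[fun_prop]
lemma Struc.Dfn.inBox {k : ℕ} {p q : Fin k → N} {w : Γ → Fin k → N} (hw : S.Dfn w) :
    S.Dfn (fun x => InBox p q (w x)) := by
  unfold InBox
  fun_prop

lemma exists_choice_inBox {k : ℕ} {p q : Fin k → N} (h : ∀ i, Choosable S (p i) (q i))
    {R : Γ → (Fin k → N) → Prop} (hR : S.Dfn (fun z : Γ × (Fin k → N) => R z.1 z.2)) :
    ∃ c : Γ → (Fin k → N), S.Dfn c ∧ ∀ x, (∃ w, InBox p q w ∧ R x w) →
      InBox p q (c x) ∧ R x (c x) := by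
  induction k with
  | zero =>
    exact ⟨fun _ => Fin.elim0, by fun_prop, fun x ⟨w, h1, h2⟩ =>
      ⟨fun i => i.elim0, (Subsingleton.elim w Fin.elim0) ▸ h2⟩⟩
  | succ k ih =>
    obtain ⟨c, hc, hcs⟩ := (h 0).choice (S := S)
      (R := fun x t => ∃ w, InBox (Fin.tail p) (Fin.tail q) w ∧ R x (Fin.cons t w)) (by fun_prop)
    obtain ⟨d, hd, hds⟩ := ih (p := Fin.tail p) (q := Fin.tail q) (fun i => h i.succ)
      (R := fun x w => R x (Fin.cons (c x) w)) (by fun_prop)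
    refine ⟨fun x => Fin.cons (c x) (d x), by fun_prop, fun x hx => ?_⟩
    obtain ⟨w, h1, h2⟩ := hx
    obtain ⟨h3, h4⟩ := hcs x ⟨w 0, h1 0, Fin.tail w, fun i => h1 i.succ, by
      rwa [Fin.cons_self_tail]⟩
    obtain ⟨h5, h6⟩ := hds x h4
    refine ⟨fun i => ?_, h6⟩
    induction i using Fin.cases with
    | zero => exact h3
    | succ i => exact h5 i

variable [TopologicalSpace N] [OrderTopology N]

lemma not_fr_of_eventually {P : N → Prop} {c : N} (h : ∀ᶠ s in 𝓝 c, P s) : ¬ Fr P c := by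
  intro hF
  obtain ⟨a, b, hab, hsub⟩ := mem_nhds_iff_exists_Ioo_subset.1 h
  obtain ⟨-, t, h1, h2, h3⟩ := hF a b hab.1 hab.2
  exact h3 (hsub ⟨h1, h2⟩)

lemma not_fr_of_eventually_not {P : N → Prop} {c : N} (h : ∀ᶠ s in 𝓝 c, ¬ P s) : ¬ Fr P c := by
  intro hF
  obtain ⟨a, b, hab, hsub⟩ := mem_nhds_iff_exists_Ioo_subset.1 h
  obtain ⟨⟨t, h1, h2, h3⟩, -⟩ := hF a b hab.1 hab.2
  exact hsub ⟨h1, h2⟩ h3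

lemma exists_fr_lt {f g : N → N} (hf : S.Dfn f) (hg : S.Dfn g) {a b : N} (hab : a < b)
    (hfa : ContinuousAt f a) (hga : ContinuousAt g a) (hfb : ContinuousAt f b)
    (hgb : ContinuousAt g b) (h1 : f a < g a) (h2 : g b < f b) :
    ∃ c, (a < c ∧ c < b) ∧ Fr (fun s => f s < g s) c := by
  obtain ⟨c, hac, hcb, hc⟩ := exists_fr (S := S) (P := fun s => f s < g s) (by fun_prop) hab.le
    fun h => (h.1 h1).not_gt h2
  refine ⟨c, ⟨lt_of_le_of_ne hac ?_, lt_of_le_of_ne hcb ?_⟩, hc⟩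
  · rintro rfl
    exact not_fr_of_eventually (hfa.eventually_lt hga h1) hc
  · rintro rfl
    exact not_fr_of_eventually_not ((hgb.eventually_lt hfb h2).mono fun s hs => hs.not_gt) hc

/-- A definable family `H a b` which vanishes only on the diagonal and is continuous in each
variable gives definable choice for subintervals. -/
lemma choosable_of_diagonal {m : ℕ} {H : N → N → Fin m → N}
    (hH : S.Dfn (fun z : N × N => H z.1 z.2)) {v : Fin m → N} {p q : N}
    (hdiag : ∀ a, p ≤ a → a ≤ q → H a a = v)
    (hoff : ∀ a b, p ≤ a → a < b → b ≤ q → H a b ≠ v)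
    (hcont : ∀ a b, p ≤ a → a ≤ q → p ≤ b → b ≤ q →
      ContinuousAt (fun s => H a s) b ∧ ContinuousAt (fun s => H s b) a) : Choosable S p q := by
  obtain ⟨mid, hmid, hm⟩ := Struc.Dfn.exists_choice_min (S := S)
    (Q := fun (z : N × N) c => ∃ i, (z.1 < c ∧ c < z.2) ∧
      (Fr (fun s => H z.1 s i < H s z.2 i) c ∨ Fr (fun s => H s z.2 i < H z.1 s i) c))
    (by fun_prop)
  refine ⟨mid, hmid, fun a b hpa hab hbq => ?_⟩
  have hpb := hpa.trans hab.le
  have haq := hab.le.trans hbq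
  have d1 : ∀ i, S.Dfn (fun s => H a s i) := fun i =>
    Struc.Dfn.right (P := fun a s => H a s i) (by fun_prop) a
  have d2 : ∀ i, S.Dfn (fun s => H s b i) := fun i =>
    Struc.Dfn.right (P := fun b s => H s b i) (by fun_prop) b
  obtain ⟨i, hi⟩ := Function.ne_iff.1 (hoff a b hpa hab hbq)
  have ca1 : ContinuousAt (fun s => H a s i) a :=
    continuousAt_pi.1 (hcont a a hpa haq hpa haq).1 i
  have cb1 : ContinuousAt (fun s => H a s i) b :=
    continuousAt_pi.1 (hcont a b hpa haq hpb hbq).1 i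
  have ca2 : ContinuousAt (fun s => H s b i) a :=
    continuousAt_pi.1 (hcont a b hpa haq hpb hbq).2 i
  have cb2 : ContinuousAt (fun s => H s b i) b :=
    continuousAt_pi.1 (hcont b b hpb hbq hpb hbq).2 i
  have hex : ∃ c, ∃ i, (a < c ∧ c < b) ∧
      (Fr (fun s => H a s i < H s b i) c ∨ Fr (fun s => H s b i < H a s i) c) := by
    rcases lt_or_gt_of_ne hi with hlt | hlt
    · obtain ⟨c, h1, h2⟩ := exists_fr_lt (d2 i) (d1 i) hab ca2 ca1 cb2 cb1
        (by rwa [hdiag a hpa haq]) (by rwa [hdiag b hpb hbq])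
      exact ⟨c, i, h1, Or.inr h2⟩
    · obtain ⟨c, h1, h2⟩ := exists_fr_lt (d1 i) (d2 i) hab ca1 ca2 cb1 cb2
        (by rwa [hdiag a hpa haq]) (by rwa [hdiag b hpb hbq])
      exact ⟨c, i, h1, Or.inl h2⟩
  have hfin : ¬ Inf (fun c => ∃ i, (a < c ∧ c < b) ∧
      (Fr (fun s => H a s i < H s b i) c ∨ Fr (fun s => H s b i < H a s i) c)) := by
    intro h
    obtain ⟨i, hi⟩ := inf_finite_ex h
    rcases inf_or (hi.mono fun c hc => hc.2) with h | h
    · exact h (fr_finite (S := S) ((d1 i).lt (d2 i)))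
    · exact h (fr_finite (S := S) ((d2 i).lt (d1 i)))
  obtain ⟨i, h, -⟩ := hm (a, b) (Inf.exists_least hfin hex)
  exact h

end Choice

section GroupOperations

variable {N : Type u} [LinearOrder N] [TopologicalSpace N] {S : Struc N} {m : ℕ} (G : DefGroup S m)

open Classical in
/-- The multiplication of `G`, extended to a total function with a definable graph. -/
noncomputable def DefGroup.tmul (x y : Fin m → N) : Fin m → N :=
  if x ∈ G.carrier ∧ y ∈ G.carrier then G.mul x y else x

open Classical in
/-- The inversion of `G`, extended to a total function with a definable graph. -/
noncomputable def DefGroup.tinv (x : Fin m → N) : Fin m → N :=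
  if x ∈ G.carrier then G.inv x else x

variable {G} {x y z : Fin m → N}

lemma DefGroup.tmul_eq (hx : x ∈ G.carrier) (hy : y ∈ G.carrier) : G.tmul x y = G.mul x y :=
  if_pos ⟨hx, hy⟩

lemma DefGroup.tinv_eq (hx : x ∈ G.carrier) : G.tinv x = G.inv x := if_pos hx

lemma DefGroup.tmul_mem (hx : x ∈ G.carrier) (hy : y ∈ G.carrier) : G.tmul x y ∈ G.carrier := by
  rw [tmul_eq hx hy]
  exact G.mul_mem hx hy

lemma DefGroup.tinv_mem (hx : x ∈ G.carrier) : G.tinv x ∈ G.carrier := by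
  rw [tinv_eq hx]
  exact G.inv_mem hx

lemma DefGroup.tmul_coe (a b : G.Elt) : G.tmul a.1 b.1 = (a * b).1 := tmul_eq a.2 b.2

lemma DefGroup.tinv_coe (a : G.Elt) : G.tinv a.1 = (a⁻¹).1 := tinv_eq a.2

lemma DefGroup.exists_elt (hx : x ∈ G.carrier) : ∃ a : G.Elt, a.1 = x := ⟨⟨x, hx⟩, rfl⟩

lemma DefGroup.tmul_tinv_tmul (hx : x ∈ G.carrier) (hy : y ∈ G.carrier) (hz : z ∈ G.carrier) :
    G.tmul (G.tmul x (G.tinv y)) (G.tmul y z) = G.tmul x z := by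
  obtain ⟨x, rfl⟩ := exists_elt hx
  obtain ⟨y, rfl⟩ := exists_elt hy
  obtain ⟨z, rfl⟩ := exists_elt hz
  simp only [tinv_coe, tmul_coe, mul_assoc, inv_mul_cancel_left]

lemma DefGroup.tmul_tmul_tinv (hx : x ∈ G.carrier) (hy : y ∈ G.carrier) :
    G.tmul (G.tmul x y) (G.tinv y) = x := by
  obtain ⟨x, rfl⟩ := exists_elt hx
  obtain ⟨y, rfl⟩ := exists_elt hy
  simp only [tinv_coe, tmul_coe, mul_inv_cancel_right]

lemma DefGroup.tmul_left_cancel (hx : x ∈ G.carrier) (hy : y ∈ G.carrier)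
    (hz : z ∈ G.carrier) (h : G.tmul x y = G.tmul x z) : y = z := by
  obtain ⟨x, rfl⟩ := exists_elt hx
  obtain ⟨y, rfl⟩ := exists_elt hy
  obtain ⟨z, rfl⟩ := exists_elt hz
  simp only [tmul_coe] at h
  have e : x * y = x * z := Subtype.ext h
  rw [mul_left_cancel e]

lemma DefGroup.tmul_right_cancel (hx : x ∈ G.carrier) (hy : y ∈ G.carrier)
    (hz : z ∈ G.carrier) (h : G.tmul x z = G.tmul y z) : x = y := by
  rw [← tmul_tmul_tinv hx hz, h, tmul_tmul_tinv hy hz]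

end GroupOperations

section GroupDefinability

variable {N : Type u} [LinearOrder N] [DenselyOrdered N] [NoMinOrder N] [NoMaxOrder N] [Nonempty N]
  [TopologicalSpace N] {S : Struc N} {Γ : Type u} [Ctx N Γ] {m n : ℕ}

lemma dfn_mem {A : Set (Fin m → N)} (hA : S.Def m A) {f : Γ → Fin m → N} (hf : S.Dfn f) :
    S.Dfn (fun x => f x ∈ A) :=
  (dfn_mem_iff.2 hA).comp hf

@[fun_prop]
lemma DefGroup.dfn_mem_carrier (G : DefGroup S m) {f : Γ → Fin m → N} (hf : S.Dfn f) :
    S.Dfn (fun x => f x ∈ G.carrier) :=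
  dfn_mem G.carrier_def hf

lemma dfn_graph_of_defFunOn {A : Set (Fin m → N)} {f : (Fin m → N) → (Fin n → N)}
    (h : S.DefFunOn A f) :
    S.Dfn (fun p : (Fin m → N) × (Fin n → N) => p.1 ∈ A ∧ f p.1 = p.2) := by
  have := dfn_mem h (f := fun p : (Fin m → N) × (Fin n → N) => Fin.append p.1 p.2) (by fun_prop)
  refine this.congr fun p => ?_
  have e1 : (Fin.append p.1 p.2 ∘ Fin.castAdd n) = p.1 := by ext; simp
  have e2 : (Fin.append p.1 p.2 ∘ Fin.natAdd m) = p.2 := by ext; simp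
  rw [mem_ofPred_eq, e1, e2]

lemma defFunOn_of_dfn {A : Set (Fin m → N)} (hA : S.Def m A) {f : (Fin m → N) → (Fin n → N)}
    (h : S.Dfn f) : S.DefFunOn A f := by
  refine dfn_mem_iff.1 ?_
  have h1 : S.Dfn (fun z : Fin (m + n) → N => fun i => z (Fin.castAdd n i)) := by fun_prop
  have h2 : S.Dfn (fun z : Fin (m + n) → N => fun i => z (Fin.natAdd m i)) := by fun_prop
  exact (dfn_mem hA h1).and ((h.comp h1).eq h2)

lemma DefGroup.dfn_mul_graph (G : DefGroup S m) : S.Dfn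
    (fun p : ((Fin m → N) × (Fin m → N)) × (Fin m → N) =>
      (p.1.1 ∈ G.carrier ∧ p.1.2 ∈ G.carrier) ∧ G.mul p.1.1 p.1.2 = p.2) := by
  have := dfn_mem G.mul_graph_def (f := fun p : ((Fin m → N) × (Fin m → N)) × (Fin m → N) =>
    Fin.append (Fin.append p.1.1 p.1.2) p.2) (by fun_prop)
  refine this.congr fun p => ?_
  set z := Fin.append (Fin.append p.1.1 p.1.2) p.2 with hz
  have e1 : z ∘ Fin.castAdd m ∘ Fin.castAdd m = p.1.1 := by ext; simp [hz]
  have e2 : z ∘ Fin.castAdd m ∘ Fin.natAdd m = p.1.2 :=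
    funext fun i => (Fin.append_left _ _ _).trans (Fin.append_right _ _ _)
  have e3 : z ∘ Fin.natAdd (m + m) = p.2 := by ext; simp [hz]
  rw [mem_ofPred_eq, e1, e2, e3, and_assoc]

lemma DefGroup.dfn_tmul_aux (G : DefGroup S m) :
    S.Dfn (fun p : (Fin m → N) × (Fin m → N) => G.tmul p.1 p.2) := by
  have h := G.dfn_mul_graph
  refine Struc.Dfn.ofGraph (Struc.Dfn.congr (h.or (Struc.Dfn.and (P := fun p =>
    ¬ (p.1.1 ∈ G.carrier ∧ p.1.2 ∈ G.carrier)) (Q := fun p => p.2 = p.1.1) (by fun_prop)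
    (by fun_prop))) fun p => ?_)
  unfold tmul
  split_ifs with hc
  · simp [hc, eq_comm]
  · simp [hc]

@[fun_prop]
lemma DefGroup.dfn_tmul (G : DefGroup S m) {f g : Γ → Fin m → N} (hf : S.Dfn f) (hg : S.Dfn g) :
    S.Dfn (fun x => G.tmul (f x) (g x)) :=
  G.dfn_tmul_aux.comp (hf.prodMk hg)

lemma DefGroup.dfn_tinv_aux (G : DefGroup S m) : S.Dfn (fun x : Fin m → N => G.tinv x) := by
  have h := dfn_graph_of_defFunOn G.inv_graph_def
  refine Struc.Dfn.ofGraph (Struc.Dfn.congr (h.or (Struc.Dfn.and (P := fun p =>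
    ¬ p.1 ∈ G.carrier) (Q := fun p => p.2 = p.1) (by fun_prop) (by fun_prop))) fun p => ?_)
  unfold tinv
  split_ifs with hc
  · simp [hc, eq_comm]
  · simp [hc]

@[fun_prop]
lemma DefGroup.dfn_tinv (G : DefGroup S m) {f : Γ → Fin m → N} (hf : S.Dfn f) :
    S.Dfn (fun x => G.tinv (f x)) :=
  G.dfn_tinv_aux.comp hf

end GroupDefinability

section Continuity

variable {N : Type u} [LinearOrder N] [DenselyOrdered N] [NoMinOrder N] [NoMaxOrder N] [Nonempty N]
  [TopologicalSpace N] [OrderTopology N] {S : Struc N} {Γ : Type u} [Ctx N Γ] {m k : ℕ}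

lemma eventually_nhds_iff_Ioo {P : N → Prop} {t : N} :
    (∀ᶠ s in 𝓝 t, P s) ↔ ∃ a b, (a < t ∧ t < b) ∧ ∀ s, a < s → s < b → P s := by
  refine mem_nhds_iff_exists_Ioo_subset.trans ?_
  exact ⟨fun ⟨a, b, h, h'⟩ => ⟨a, b, h, fun s h1 h2 => h' ⟨h1, h2⟩⟩,
    fun ⟨a, b, h, h'⟩ => ⟨a, b, h, fun s hs => h' s hs.1 hs.2⟩⟩

@[fun_prop]
lemma Struc.Dfn.continuousAt {f : Γ → N → Fin m → N} {t : Γ → N}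
    (hf : S.Dfn (fun p : Γ × N => f p.1 p.2)) (ht : S.Dfn t) :
    S.Dfn (fun x => ContinuousAt (fun s => f x s) (t x)) := by
  have : S.Dfn (fun x => ∀ i, (∀ e, e < f x (t x) i → ∃ a b, (a < t x ∧ t x < b) ∧
      ∀ s, a < s → s < b → e < f x s i) ∧ (∀ e, e > f x (t x) i → ∃ a b, (a < t x ∧ t x < b) ∧
      ∀ s, a < s → s < b → f x s i < e)) := by fun_prop
  refine this.congr fun x => ?_
  rw [continuousAt_pi]
  refine forall_congr' fun i => ?_
  rw [ContinuousAt, tendsto_order]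
  simp only [eventually_nhds_iff_Ioo]

lemma big_big_comm {l : ℕ} {R : (Fin k → N) → (Fin l → N) → Prop}
    (hR : S.Dfn (fun p : (Fin k → N) × (Fin l → N) => R p.1 p.2))
    (h : Big k (fun z => Big l (fun w => R z w))) : Big l (fun w => Big k (fun z => R z w)) := by
  induction k with
  | zero => exact h
  | succ k ih =>
    have h1 : Inf (fun t => Big l (fun w => Big k (fun z => R (Fin.cons t z) w))) :=
      Inf.mono h fun t ht => ih (R := fun z w => R (Fin.cons t z) w) (by fun_prop) ht
    exact (inf_big_comm (S := S) (by fun_prop)).1 h1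

/-- A relation with finite fibres that misses the diagonal misses a square around it. -/
lemma exists_square_of_diagonal {D : N → N → Prop} (hD : S.Dfn (fun z : N × N => D z.1 z.2))
    (hfin : ∀ a, ¬ Inf (fun s => D a s)) {p q : N} (hpq : p < q)
    (hdiag : ∀ a, p < a → a < q → ¬ D a a) :
    ∃ p' q', p ≤ p' ∧ p' < q' ∧ q' ≤ q ∧ ∀ a s, p' < a → a < q' → p' < s → s < q' → ¬ D a s := by
  obtain ⟨e, he⟩ := exists_inf_of_inf_inf (S := S)
    (R := fun a e => (p < a ∧ a < q) ∧ a < e ∧ ∀ s, a < s → s < e → ¬ D a s) (by fun_prop)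
    (inf_of_Ioo hpq fun a h1 h2 => by
      obtain ⟨d, hd, hd'⟩ := exists_right_free (not_inf.1 (hfin a)) a
      exact inf_of_Ioo hd fun e h3 h4 => ⟨⟨h1, h2⟩, h3, fun s h5 h6 hs =>
        (h6.trans h4).not_ge (hd' s hs h5)⟩)
  obtain ⟨p₁, q₁, h₁, hI₁⟩ := he.exists_Ioo (S := S) (by fun_prop)
  obtain ⟨e', he'⟩ := exists_inf_of_inf_inf (S := S)
    (R := fun a e => (p₁ < a ∧ a < q₁) ∧ e < a ∧ ∀ s, e < s → s < a → ¬ D a s) (by fun_prop)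
    (inf_of_Ioo h₁ fun a h1 h2 => by
      obtain ⟨d, hd, hd'⟩ := exists_left_free (not_inf.1 (hfin a)) a
      exact inf_of_Ioo hd fun e h3 h4 => ⟨⟨h1, h2⟩, h4, fun s h5 h6 hs =>
        (h3.trans h5).not_ge (hd' s hs h6)⟩)
  obtain ⟨p₂, q₂, h₂, hI₂⟩ := he'.exists_Ioo (S := S) (by fun_prop)
  have key : ∀ a, p₂ < a → a < q₂ → p ≤ a ∧ a ≤ q := fun a h1 h2 => by
    obtain ⟨⟨h3, h4⟩, -⟩ := hI₂ a h1 h2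
    obtain ⟨⟨h5, h6⟩, -⟩ := hI₁ a h3 h4
    exact ⟨h5.le, h6.le⟩
  refine ⟨p₂, q₂, le_of_forall_gt_imp_ge_of_dense fun a ha => ?_, h₂,
    le_of_forall_lt_imp_le_of_dense fun a ha => ?_, fun a s ha ha' hs hs' => ?_⟩
  · obtain ⟨b, hb, hb'⟩ := exists_between (lt_min ha h₂)
    exact (key b hb (hb'.trans_le (min_le_right _ _))).1.trans (hb'.trans_le (min_le_left _ _)).le
  · obtain ⟨b, hb, hb'⟩ := exists_between (max_lt ha h₂)
    exact ((le_max_left _ _).trans hb.le).trans (key b ((le_max_right _ _).trans_lt hb) hb').2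
  · obtain ⟨⟨h1, h2⟩, h3, h4⟩ := hI₂ a ha ha'
    obtain ⟨⟨h5, h6⟩, h7, h8⟩ := hI₂ s hs hs'
    obtain ⟨⟨h9, h10⟩, h11, h12⟩ := hI₁ a h1 h2
    rcases lt_trichotomy a s with h | rfl | h
    · exact h12 s h (hI₁ s h5 h6).2.1
    · exact hdiag a h9 h10
    · exact h4 s h7 h

/-- Over a large set of base points, a definable group has finite fibres under a coordinate
projection with large image. -/
lemma DefGroup.not_big_inf_coord (G : DefGroup S m) (p : Fin (odim G.carrier) → Fin m) :
    ¬ Big (odim G.carrier) (fun u => ∃ i, Inf (fun t => ∃ y, (y ∈ G.carrier ∧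
      (fun l => y (p l)) = u) ∧ y i = t)) := by
  intro h
  obtain ⟨i, hi⟩ := big_finite_ex h
  have h1 := (inf_big_comm (S := S) (R := fun t u => ∃ y, (y ∈ G.carrier ∧
      (fun l => y (p l)) = u) ∧ y i = t) (by fun_prop)).2 hi
  have h2 : Big (odim G.carrier + 1) (fun u => ∃ y ∈ G.carrier, y ∘ Fin.cons i p = u) := by
    refine Inf.mono h1 fun t ht => ht.mono ?_
    rintro u ⟨y, ⟨hy, hyu⟩, hyt⟩
    refine ⟨y, hy, funext fun l => ?_⟩
    induction l using Fin.cases with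
    | zero => exact hyt
    | succ l => exact congrFun hyu l
  have := le_odim G.carrier_def _ h2
  omega

/-- A relation on `G × N` with finite fibres over `G` cannot contain infinitely many pairs
`(T b w, b)` for a large set of `w`, if each `T b` is injective. -/
lemma DefGroup.not_big_inf_of_finite (G : DefGroup S m)
    {c : (Fin (odim G.carrier) → N) → (Fin m → N)} {B : (Fin (odim G.carrier) → N) → Prop}
    (hc : S.Dfn c) (hB : S.Dfn B) (hinj : ∀ z z', B z → B z' → c z = c z' → z = z')
    {Bad : (Fin m → N) → N → Prop} (hBad : S.Dfn (fun p : (Fin m → N) × N => Bad p.1 p.2))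
    (hfin : ∀ y ∈ G.carrier, ¬ Inf (fun b => Bad y b))
    {T : N → (Fin m → N) → (Fin m → N)} (hT : S.Dfn (fun p : N × (Fin m → N) => T p.1 p.2))
    {I : N → Prop} (hI : S.Dfn I) (hTG : ∀ b z, I b → B z → T b (c z) ∈ G.carrier)
    (hTinj : ∀ b z z', I b → B z → B z' → T b (c z) = T b (c z') → c z = c z') :
    ¬ Big (odim G.carrier) (fun z => B z ∧ Inf (fun b => I b ∧ Bad (T b (c z)) b)) := by
  intro h
  have h1 : Inf (fun b => Big (odim G.carrier) (fun z => B z ∧ I b ∧ Bad (T b (c z)) b)) :=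
    (inf_big_comm (S := S) (by fun_prop)).2 (h.mono fun z hz => hz.2.mono fun b hb => ⟨hz.1, hb⟩)
  have h2 : Inf (fun b => ∃ p : Fin (odim G.carrier) → Fin m, Big (odim G.carrier) (fun u =>
      ∃ y, (y ∈ G.carrier ∧ (fun l => y (p l)) = u) ∧ Bad y b)) := by
    refine Inf.mono h1 fun b hb => ?_
    have hIb : I b := hb.exists.elim fun z hz => hz.2.1
    obtain ⟨p, hp⟩ := hb.exists_big_proj (S := S) (f := fun z => T b (c z)) (by fun_prop)
      (by fun_prop) fun z z' hz hz' e => hinj _ _ hz.1 hz'.1 (hTinj b z z' hIb hz.1 hz'.1 e)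
    exact ⟨p, hp.mono fun u ⟨z, hz, hzu⟩ => ⟨_, ⟨hTG b z hIb hz.1, hzu⟩, hz.2.2⟩⟩
  obtain ⟨p, hp⟩ := inf_finite_ex h2
  have h3 := (inf_big_comm (S := S) (by fun_prop)).1 hp
  rcases big_or (h3.mono (B := fun u => (∃ i, Inf (fun t => ∃ y, (y ∈ G.carrier ∧
      (fun l => y (p l)) = u) ∧ y i = t)) ∨ ((¬ ∃ i, Inf (fun t => ∃ y, (y ∈ G.carrier ∧
      (fun l => y (p l)) = u) ∧ y i = t)) ∧ Inf (fun b => ∃ y, (y ∈ G.carrier ∧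
      (fun l => y (p l)) = u) ∧ Bad y b))) fun u hu => by tauto) with h4 | h4
  · exact G.not_big_inf_coord p h4
  obtain ⟨u, hu, hinf⟩ := h4.exists
  push Not at hu
  have hY : {y | y ∈ G.carrier ∧ (fun l => y (p l)) = u}.Finite := by
    refine (Set.Finite.pi' fun i => not_inf.1 (hu i)).subset ?_
    intro y hy i
    exact ⟨y, hy, rfl⟩
  refine hinf ((hY.biUnion fun y hy => not_inf.1 (hfin y hy.1)).subset ?_)
  rintro b ⟨y, hy, hb⟩
  exact Set.mem_biUnion (x := y) hy hb

/-- The domain of an injective definable curve in `G` contains intervals with definable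
choice. -/
lemma DefGroup.exists_choosable (G : DefGroup S m)
    {c : (Fin (odim G.carrier) → N) → (Fin m → N)} {B : (Fin (odim G.carrier) → N) → Prop}
    (hc : S.Dfn c) (hB : S.Dfn B) (hBbig : Big (odim G.carrier) B)
    (hcG : ∀ z, B z → c z ∈ G.carrier) (hcinj : ∀ z z', B z → B z' → c z = c z' → z = z')
    {γ : N → Fin m → N} (hγ : S.Dfn γ) {a b : N} (hab : a < b)
    (hmem : ∀ t, a < t → t < b → γ t ∈ G.carrier)
    (hinj : ∀ s t, a < s → s < b → a < t → t < b → γ s = γ t → s = t) :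
    ∃ p q, a < p ∧ p < q ∧ q < b ∧ Choosable S p q := by
  let H : (Fin m → N) → (Fin m → N) → N → N → Fin m → N := fun u w s t =>
    G.tmul (G.tmul u (G.tinv (γ s))) (G.tmul (γ t) w)
  let D₁ : (Fin m → N) → (Fin m → N) → N → N → Prop := fun u w s t =>
    ¬ ContinuousAt (fun s => H u w s t) s
  let D₂ : (Fin m → N) → (Fin m → N) → N → N → Prop := fun u w s t =>
    ¬ ContinuousAt (fun t => H u w s t) t
  have dD₁ : S.Dfn (fun z : ((Fin m → N) × (Fin m → N)) × (N × N) =>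
    D₁ z.1.1 z.1.2 z.2.1 z.2.2) := by dsimp only [D₁, H]; fun_prop
  have dD₂ : S.Dfn (fun z : ((Fin m → N) × (Fin m → N)) × (N × N) =>
    D₂ z.1.1 z.1.2 z.2.1 z.2.2) := by dsimp only [D₂, H]; fun_prop
  have hγG : ∀ t, a < t ∧ t < b → γ t ∈ G.carrier := fun t ht => hmem t ht.1 ht.2
  obtain ⟨z, hz, z', hz', hfin₁, hfin₂⟩ : ∃ z, B z ∧ ∃ z', B z' ∧
      ¬ Inf (fun t => (a < t ∧ t < b) ∧ D₁ (c z) (c z') t t) ∧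
      ¬ Inf (fun t => (a < t ∧ t < b) ∧ D₂ (c z) (c z') t t) := by
    by_contra! hcon
    have h1 : Big (odim G.carrier) (fun z => Big (odim G.carrier) (fun z' =>
        B z ∧ B z' ∧ Inf (fun t => (a < t ∧ t < b) ∧ D₂ (c z) (c z') t t))) := by
      refine hBbig.mono fun z hz => ?_
      refine (big_or (hBbig.mono (B := fun z' =>
        (B z' ∧ Inf (fun t => (a < t ∧ t < b) ∧ D₁ (c z) (c z') t t)) ∨
        (B z ∧ B z' ∧ Inf (fun t => (a < t ∧ t < b) ∧ D₂ (c z) (c z') t t))) fun z' hz' => ?_)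
        ).resolve_left ?_
      · by_cases h : Inf (fun t => (a < t ∧ t < b) ∧ D₁ (c z) (c z') t t)
        · exact Or.inl ⟨hz', h⟩
        · exact Or.inr ⟨hz, hz', hcon z hz z' hz' h⟩
      · exact G.not_big_inf_of_finite hc hB hcinj
          (Bad := fun y t => ¬ ContinuousAt (fun s => G.tmul (G.tmul (c z) (G.tinv (γ s))) y) t)
          (T := fun t w => G.tmul (γ t) w) (by fun_prop)
          (fun y _ => not_inf_not_continuousAt_pi (S := S) (by fun_prop)) (by fun_prop)
          (by fun_prop) (fun t z ht hz => tmul_mem (hγG t ht) (hcG z hz))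
          fun t z z' ht hz hz' e => tmul_left_cancel (hγG t ht) (hcG z hz) (hcG z' hz') e
    obtain ⟨z', hz'⟩ := (big_big_comm (S := S) (by fun_prop) h1).exists
    exact G.not_big_inf_of_finite hc hB hcinj
      (Bad := fun x t => ¬ ContinuousAt (fun s => G.tmul x (G.tmul (γ s) (c z'))) t)
      (T := fun t u => G.tmul u (G.tinv (γ t))) (by fun_prop)
      (fun y _ => not_inf_not_continuousAt_pi (S := S) (by fun_prop)) (by fun_prop)
      (by fun_prop) (fun t z ht hz => tmul_mem (hcG z hz) (tinv_mem (hγG t ht)))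
      (fun t z z' ht hz hz' e => tmul_right_cancel (hcG z hz) (hcG z' hz')
        (tinv_mem (hγG t ht)) e) (hz'.mono fun z hz => ⟨hz.1, hz.2.2⟩)
  obtain ⟨d, had, hd⟩ := exists_right_free ((not_inf.1 hfin₁).union (not_inf.1 hfin₂)) a
  have hdiag : ∀ t, a < t → t < min b d → ¬ D₁ (c z) (c z') t t ∧ ¬ D₂ (c z) (c z') t t := by
    intro t h1 h2
    have hI : a < t ∧ t < b := ⟨h1, h2.trans_le (min_le_left _ _)⟩
    have hlt := h2.trans_le (min_le_right _ _)
    exact ⟨fun h => hlt.not_ge (hd t (Or.inl ⟨hI, h⟩) h1),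
      fun h => hlt.not_ge (hd t (Or.inr ⟨hI, h⟩) h1)⟩
  obtain ⟨p₁, q₁, hp₁, hpq₁, hq₁, hsq₁⟩ := exists_square_of_diagonal (S := S)
    (D := fun t s => D₁ (c z) (c z') s t) (by fun_prop)
    (fun t => not_inf_not_continuousAt_pi (S := S) (f := fun s => H (c z) (c z') s t)
      (by dsimp only [H]; fun_prop)) (lt_min hab had) fun t h1 h2 => (hdiag t h1 h2).1
  obtain ⟨p₂, q₂, hp₂, hpq₂, hq₂, hsq₂⟩ := exists_square_of_diagonal (S := S)
    (D := fun s t => D₂ (c z) (c z') s t) (by fun_prop)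
    (fun s => not_inf_not_continuousAt_pi (S := S) (f := fun t => H (c z) (c z') s t)
      (by dsimp only [H]; fun_prop)) hpq₁
    fun t h1 h2 => (hdiag t (hp₁.trans_lt h1) (h2.trans_le hq₁)).2
  obtain ⟨p, hp₂p, hpq₂⟩ := exists_between hpq₂
  obtain ⟨q, hpq, hqq₂⟩ := exists_between hpq₂
  have hp₁p : p₁ < p := hp₂.trans_lt hp₂p
  have hqq₁ : q < q₁ := hqq₂.trans_le hq₂
  have hap : a < p := hp₁.trans_lt hp₁p
  have hqb : q < b := hqq₁.trans_le (hq₁.trans (min_le_left _ _))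
  have hHd : ∀ t, p ≤ t → t ≤ q → H (c z) (c z') t t = G.tmul (c z) (c z') := fun t h1 h2 =>
    tmul_tinv_tmul (hcG z hz) (hmem t (hap.trans_le h1) (h2.trans_lt hqb)) (hcG z' hz')
  refine ⟨p, q, hap, hpq, hqb, choosable_of_diagonal (H := H (c z) (c z'))
    (by dsimp only [H]; fun_prop) hHd (fun s t h1 h2 h3 e => ?_) fun s t h1 h2 h3 h4 => ⟨?_, ?_⟩⟩
  · have hs1 := hap.trans_le h1
    have ht2 := h3.trans_lt hqb
    have hs2 := h2.trans ht2
    have ht1 := hs1.trans h2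
    rw [← hHd s h1 (h2.le.trans h3)] at e
    have m1 := hmem s hs1 hs2
    have m2 := hmem t ht1 ht2
    have := tmul_left_cancel (tmul_mem (hcG z hz) (tinv_mem m1)) (tmul_mem m2 (hcG z' hz'))
      (tmul_mem m1 (hcG z' hz')) e
    exact h2.ne (hinj s t hs1 hs2 ht1 ht2 (tmul_right_cancel m2 m1 (hcG z' hz') this).symm)
  · exact not_not.1 (hsq₂ s t (hp₂p.trans_le h1) (h2.trans_lt hqq₂) (hp₂p.trans_le h3)
      (h4.trans_lt hqq₂))
  · exact not_not.1 (hsq₁ t s (hp₁p.trans_le h3) (h4.trans_lt hqq₁) (hp₁p.trans_le h1)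
      (h2.trans_lt hqq₁))

end Continuity

section Selection

variable {N : Type u} [LinearOrder N] [DenselyOrdered N] [NoMinOrder N] [NoMaxOrder N] [Nonempty N]
  [TopologicalSpace N] [OrderTopology N] {S : Struc N} {m : ℕ}

/-- A definable group contains a definable copy of a box of full dimension, all of whose sides
have definable choice. -/
lemma DefGroup.exists_choosable_box (G : DefGroup S m) :
    ∃ (s : (Fin (odim G.carrier) → N) → (Fin m → N)) (a b : Fin (odim G.carrier) → N),
      S.Dfn s ∧ (∀ i, a i < b i) ∧ (∀ i, Choosable S (a i) (b i)) ∧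
      (∀ w, InBox a b w → s w ∈ G.carrier) ∧
      ∀ w w', InBox a b w → InBox a b w' → s w = s w' → w = w' := by
  obtain ⟨p, hp⟩ := exists_big_proj_odim G.carrier_def ⟨_, G.one_mem⟩
  have hG : S.Dfn (fun w => w ∈ G.carrier) := dfn_mem_iff.2 G.carrier_def
  obtain ⟨s, hs, hsb⟩ := generic_choice (S := S)
    (R := fun u w => w ∈ G.carrier ∧ (fun i => w (p i)) = u)
    (Struc.Dfn.and (hG.comp (by fun_prop)) (by fun_prop)) hp
  obtain ⟨a, b, hab, hbox⟩ := hsb.exists_box (S := S)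
    (Struc.Dfn.and (hG.comp (by fun_prop)) (by fun_prop))
  obtain ⟨w₀, hw₀⟩ := exists_inBox hab
  have hinj : ∀ w w', InBox a b w → InBox a b w' → s w = s w' → w = w' := fun w w' h h' e => by
    rw [← (hbox w h).2, ← (hbox w' h').2, e]
  have hupd : ∀ i t, a i < t → t < b i → InBox a b (Function.update w₀ i t) := by
    intro i t h1 h2 l
    by_cases hl : l = i
    · subst hl
      simpa using ⟨h1, h2⟩
    · simpa [hl] using hw₀ l
  have hside : ∀ i, ∃ p q, a i < p ∧ p < q ∧ q < b i ∧ Choosable S p q := fun i =>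
    G.exists_choosable (B := InBox a b) hs (by fun_prop) (big_box hab)
      (fun w hw => (hbox w hw).1) hinj
      (γ := fun t => s (Function.update w₀ i t)) (by fun_prop) (hab i)
      (fun t h1 h2 => (hbox _ (hupd i t h1 h2)).1)
      (fun t t' h1 h2 h3 h4 e => by
        simpa using congrFun (hinj _ _ (hupd i t h1 h2) (hupd i t' h3 h4) e) i)
  choose p' q' h1 h2 h3 h4 using hside
  have hsub : ∀ w, InBox p' q' w → InBox a b w := fun w hw i =>
    ⟨(h1 i).trans (hw i).1, (hw i).2.trans (h3 i)⟩
  exact ⟨s, p', q', hs, h2, h4, fun w hw => (hbox w (hsub w hw)).1,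
    fun w w' hw hw' => hinj w w' (hsub w hw) (hsub w' hw')⟩

/-- Definable selection for a family of subsets of `N` indexed by a definable group, outside
finitely many values of the definable function `α`. -/
lemma DefGroup.exists_selection (G : DefGroup S m) {D : (Fin m → N) → Prop}
    {α : (Fin m → N) → N} {R : (Fin m → N) → N → Prop} (hD : S.Dfn D) (hα : S.Dfn α)
    (hR : S.Dfn (fun p : (Fin m → N) × N => R p.1 p.2)) (hDG : ∀ g, D g → g ∈ G.carrier)
    (hT : ∀ (T : N → Prop) (γ : N → Fin m → N), S.Dfn T → S.Dfn γ → Inf T →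
      (∀ t, T t → D (γ t) ∧ α (γ t) = t) → ∃ T' : N → Prop, S.Dfn T' ∧ Inf T' ∧
        (∀ t, T' t → T t) ∧ ∀ t t', T' t → T' t' → t < t' → R (γ t) t' ∨ R (γ t') t) :
    ∃ c : (Fin m → N) → N, S.Dfn c ∧ ¬ Inf (fun t => ∃ g, D g ∧ ¬ R g (c g) ∧ α g = t) := by
  obtain ⟨s, a, b, hs, hab, hch, hsG, hsinj⟩ := G.exists_choosable_box
  let e : (Fin m → N) → (Fin (odim G.carrier) → N) → (Fin (odim G.carrier) → N) → (Fin m → N) :=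
    fun g w w' => G.tmul (G.tmul g (s w)) (G.tinv (s w'))
  obtain ⟨c₁, hc₁, hcs₁⟩ := exists_choice_inBox hch
    (R := fun g w => ∃ w', InBox a b w' ∧ R g (α (e g w w'))) (by dsimp only [e]; fun_prop)
  obtain ⟨c₂, hc₂, hcs₂⟩ := exists_choice_inBox hch
    (R := fun g w' => R g (α (e g (c₁ g) w'))) (by dsimp only [e]; fun_prop)
  refine ⟨fun g => α (e g (c₁ g) (c₂ g)), by dsimp only [e]; fun_prop, fun hinf => ?_⟩
  let B : (Fin m → N) → Prop := fun g =>
    D g ∧ ∀ w w', InBox a b w → InBox a b w' → ¬ R g (α (e g w w'))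
  have hB : S.Dfn B := by dsimp only [B, e]; fun_prop
  have hBinf : Big 1 (fun w : Fin 1 → N => ∃ g, B g ∧ α g = w 0) := by
    refine hinf.mono ?_
    rintro t ⟨g, h1, h2, h3⟩
    refine ⟨g, ⟨h1, fun w w' hw hw' hR' => h2 ?_⟩, h3⟩
    exact (hcs₂ g (hcs₁ g ⟨w, hw, w', hw', hR'⟩).2).2
  obtain ⟨c, hc, hcb⟩ := generic_choice (S := S) (R := fun w g => B g ∧ α g = w 0)
    (by fun_prop) hBinf
  obtain ⟨T, hTd, hTinf, hTsub, hTR⟩ := hT (fun t => B (c fun _ => t) ∧ α (c fun _ => t) = t)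
    (fun t => c fun _ => t) (by fun_prop) (by fun_prop) (Inf.mono hcb fun t ht => by
      have ht' : B (c (Fin.cons t Fin.elim0)) ∧ α (c (Fin.cons t Fin.elim0)) = t := ht
      rwa [show (Fin.cons t Fin.elim0 : Fin 1 → N) = fun _ => t from
        funext fun i => by fin_cases i; rfl] at ht')
    fun t ht => ⟨ht.1.1, ht.2⟩
  set γ : N → Fin m → N := fun t => c fun _ => t with hγ
  have hγG : ∀ t, T t → γ t ∈ G.carrier := fun t ht => hDG _ (hTsub t ht).1.1
  have hnot : ∀ t t' w w', T t → T t' → InBox a b w → InBox a b w' →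
      G.tmul (γ t) (s w) = G.tmul (γ t') (s w') → ¬ R (γ t) t' := by
    intro t t' w w' ht ht' hw hw' heq hR'
    refine (hTsub t ht).1.2 w w' hw hw' ?_
    have : e (γ t) w w' = γ t' := by
      dsimp only [e]
      rw [heq, tmul_tmul_tinv (hγG t' ht') (hsG w' hw')]
    rw [this, (hTsub t' ht').2]
    exact hR'
  have hbig : Big (odim G.carrier + 1)
      (fun z : Fin (odim G.carrier + 1) → N => T (z 0) ∧ InBox a b (Fin.tail z)) :=
    Inf.mono hTinf fun t ht => (big_box hab).mono fun w hw => ⟨ht, hw⟩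
  obtain ⟨p, hp⟩ := hbig.exists_big_proj (S := S)
    (f := fun z => G.tmul (γ (z 0)) (s (Fin.tail z))) (by fun_prop) (by fun_prop) (by
      rintro z z' ⟨hz, hw⟩ ⟨hz', hw'⟩ heq
      have h0 : z 0 = z' 0 := by
        rcases lt_trichotomy (z 0) (z' 0) with h | h | h
        · rcases hTR _ _ hz hz' h with h | h
          · exact (hnot _ _ _ _ hz hz' hw hw' heq h).elim
          · exact (hnot _ _ _ _ hz' hz hw' hw heq.symm h).elim
        · exact h
        · rcases hTR _ _ hz' hz h with h | h
          · exact (hnot _ _ _ _ hz' hz hw' hw heq.symm h).elim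
          · exact (hnot _ _ _ _ hz hz' hw hw' heq h).elim
      have h1 : Fin.tail z = Fin.tail z' := by
        refine hsinj _ _ hw hw' (tmul_left_cancel (hγG _ hz) (hsG _ hw) (hsG _ hw') ?_)
        rw [heq, h0]
      rw [← Fin.cons_self_tail z, ← Fin.cons_self_tail z', h0, h1])
  have := le_odim G.carrier_def p (hp.mono fun u ⟨z, hz, hzu⟩ =>
    ⟨_, tmul_mem (hγG _ hz.1) (hsG _ hz.2), hzu⟩)
  omega

lemma DefGroup.exists_selection_right (G : DefGroup S m) {D : (Fin m → N) → Prop}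
    {α : (Fin m → N) → N} {R : (Fin m → N) → N → Prop} (hD : S.Dfn D) (hα : S.Dfn α)
    (hR : S.Dfn (fun p : (Fin m → N) × N => R p.1 p.2)) (hDG : ∀ g, D g → g ∈ G.carrier)
    (h : ∀ g, D g → ∃ b, α g < b ∧ ∀ t, α g < t → t < b → R g t) :
    ∃ c : (Fin m → N) → N, S.Dfn c ∧ ¬ Inf (fun t => ∃ g, D g ∧ ¬ R g (c g) ∧ α g = t) := by
  refine G.exists_selection hD hα hR hDG fun T γ hT hγ hinf hTγ => ?_
  obtain ⟨b, hb⟩ := exists_inf_of_inf_inf (S := S)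
    (R := fun t b => T t ∧ t < b ∧ ∀ s, t < s → s < b → R (γ t) s) (by fun_prop)
    (hinf.mono fun t ht => by
      obtain ⟨b, h1, h2⟩ := h _ (hTγ t ht).1
      rw [(hTγ t ht).2] at h1 h2
      exact inf_of_Ioo h1 fun b' h3 h4 => ⟨ht, h3, fun s h5 h6 => h2 s h5 (h6.trans h4)⟩)
  exact ⟨_, by fun_prop, hb, fun t ht => ht.1, fun t t' ht ht' hlt =>
    Or.inl (ht.2.2 t' hlt ht'.2.1)⟩

lemma DefGroup.exists_selection_left (G : DefGroup S m) {D : (Fin m → N) → Prop}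
    {α : (Fin m → N) → N} {R : (Fin m → N) → N → Prop} (hD : S.Dfn D) (hα : S.Dfn α)
    (hR : S.Dfn (fun p : (Fin m → N) × N => R p.1 p.2)) (hDG : ∀ g, D g → g ∈ G.carrier)
    (h : ∀ g, D g → ∃ b, b < α g ∧ ∀ t, b < t → t < α g → R g t) :
    ∃ c : (Fin m → N) → N, S.Dfn c ∧ ¬ Inf (fun t => ∃ g, D g ∧ ¬ R g (c g) ∧ α g = t) := by
  refine G.exists_selection hD hα hR hDG fun T γ hT hγ hinf hTγ => ?_
  obtain ⟨b, hb⟩ := exists_inf_of_inf_inf (S := S)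
    (R := fun t b => T t ∧ b < t ∧ ∀ s, b < s → s < t → R (γ t) s) (by fun_prop)
    (hinf.mono fun t ht => by
      obtain ⟨b, h1, h2⟩ := h _ (hTγ t ht).1
      rw [(hTγ t ht).2] at h1 h2
      exact inf_of_Ioo h1 fun b' h3 h4 => ⟨ht, h4, fun s h5 h6 => h2 s (h3.trans h5) h6⟩)
  exact ⟨_, by fun_prop, hb, fun t ht => ht.1, fun t t' ht ht' hlt =>
    Or.inr (ht'.2.2 t ht.2.1 hlt)⟩

end Selection

section Choice

variable {N : Type u} [LinearOrder N] [DenselyOrdered N] [NoMinOrder N] [NoMaxOrder N] [Nonempty N]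
  {S : Struc N} {Γ : Type u} [Ctx N Γ]

lemma Set.Finite.exists_isLeast {F : Set N} (hF : F.Finite) (hne : F.Nonempty) :
    ∃ a, IsLeast F a := by
  obtain ⟨a, ha, h⟩ := Set.exists_min_image F id hF hne
  exact ⟨a, ha, h⟩

lemma exists_separating {F : Set N} (hF : F.Finite) :
    ∃ C : Set N, C.Finite ∧ (∃ c ∈ C, ∀ a ∈ F, c < a) ∧
      ∀ a ∈ F, ∃ c ∈ C, a < c ∧ ∀ b ∈ F, a < b → c < b := by
  obtain ⟨d, hd⟩ := exists_lower_free hF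
  have : ∀ a, ∃ c, a < c ∧ ∀ b ∈ F, a < b → c < b := fun a => by
    obtain ⟨e, hae, he⟩ := exists_right_free hF a
    obtain ⟨c, hac, hce⟩ := exists_between hae
    exact ⟨c, hac, fun b hb hab => hce.trans_le (he b hb hab)⟩
  choose f hf using this
  exact ⟨insert d (f '' F), (hF.image f).insert d, ⟨d, Set.mem_insert _ _, hd⟩,
    fun a ha => ⟨f a, Set.mem_insert_of_mem _ (Set.mem_image_of_mem f ha), hf a⟩⟩

lemma dfn_mem_finite {C : Set N} (hC : C.Finite) : S.Dfn (fun t => t ∈ C) := by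
  induction C, hC using Set.Finite.induction_on with
  | empty => exact Struc.Dfn.congr (P := fun t => t < t) (by fun_prop) fun t => by simp
  | @insert a C _ _ ih =>
    exact Struc.Dfn.congr (P := fun t => t = a ∨ t ∈ C) (Struc.Dfn.or (by fun_prop) ih)
      fun t => by simp

lemma exists_choice_or {R : Γ → N → Prop} (hR : S.Dfn (fun p : Γ × N => R p.1 p.2))
    {c d : Γ → N} (hc : S.Dfn c) (hd : S.Dfn d) :
    ∃ e : Γ → N, S.Dfn e ∧ ∀ x, R x (c x) ∨ R x (d x) → R x (e x) := by
  classical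
  have hP : S.Dfn (fun x => R x (c x)) := by fun_prop
  refine ⟨_, hP.ite hc hd, fun x hx => ?_⟩
  split_ifs with h
  · exact h
  · exact hx.resolve_left h

lemma exists_choice_finite {R : Γ → N → Prop} (hR : S.Dfn (fun p : Γ × N => R p.1 p.2))
    {C : Set N} (hC : C.Finite) :
    ∃ c : Γ → N, S.Dfn c ∧ ∀ x, (∃ t ∈ C, R x t) → R x (c x) := by
  obtain ⟨c, hc, h⟩ := Struc.Dfn.exists_choice_min (S := S) (Q := fun x t => t ∈ C ∧ R x t)
    (Struc.Dfn.and ((dfn_mem_finite hC).comp (by fun_prop)) hR)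
  exact ⟨c, hc, fun x ⟨t, ht⟩ => (h x ((hC.inter_of_left {t | R x t}).exists_isLeast ⟨t, ht⟩)).2⟩

variable [TopologicalSpace N] [OrderTopology N] {m : ℕ}

/-- Definable choice for families of subsets of `N` indexed by a definable group. -/
lemma DefGroup.exists_choice_one (G : DefGroup S m) {R : (Fin m → N) → N → Prop}
    (hR : S.Dfn (fun p : (Fin m → N) × N => R p.1 p.2)) :
    ∃ c : (Fin m → N) → N, S.Dfn c ∧ ∀ g ∈ G.carrier, (∃ t, R g t) → R g (c g) := by
  have hG : S.Dfn (fun g => g ∈ G.carrier) := dfn_mem_iff.2 G.carrier_def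
  have hfr : ∀ g, {t | Fr (R g) t}.Finite := fun g => fr_finite (hR.right g)
  obtain ⟨α, hα, hαs⟩ := Struc.Dfn.exists_choice_min (S := S)
    (Q := fun g t => Fr (fun s => R g s) t ∧ ∀ s, Fr (fun s => R g s) s → t ≤ s) (by fun_prop)
  obtain ⟨β, hβ, hβs⟩ := Struc.Dfn.exists_choice_min (S := S)
    (Q := fun g t => (Fr (fun s => R g s) t ∧ α g < t) ∧
      ∀ s, Fr (fun s => R g s) s → α g < s → t ≤ s) (by fun_prop)
  obtain ⟨c₁, hc₁, h₁⟩ := G.exists_selection_right (α := α) (R := R)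
    (D := fun g => g ∈ G.carrier ∧ ∃ b, α g < b ∧ ∀ t, α g < t → t < b → R g t)
    (by fun_prop) hα hR (fun g h => h.1) (fun g h => h.2)
  obtain ⟨c₂, hc₂, h₂⟩ := G.exists_selection_left (α := α) (R := R)
    (D := fun g => g ∈ G.carrier ∧ ∃ b, b < α g ∧ ∀ t, b < t → t < α g → R g t)
    (by fun_prop) hα hR (fun g h => h.1) (fun g h => h.2)
  obtain ⟨c₃, hc₃, h₃⟩ := G.exists_selection_left (α := β) (R := R)
    (D := fun g => g ∈ G.carrier ∧ ∃ b, b < β g ∧ ∀ t, b < t → t < β g → R g t)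
    (by fun_prop) hβ hR (fun g h => h.1) (fun g h => h.2)
  obtain ⟨C, hC, ⟨c₀, hc₀C, hc₀⟩, hsep⟩ :=
    exists_separating (((not_inf.1 h₁).union (not_inf.1 h₂)).union (not_inf.1 h₃))
  obtain ⟨c₄, hc₄, h₄⟩ := exists_choice_finite hR hC
  obtain ⟨d₁, hd₁, e₁⟩ := exists_choice_or hR hα hc₁
  obtain ⟨d₂, hd₂, e₂⟩ := exists_choice_or hR hd₁ hc₂
  obtain ⟨d₃, hd₃, e₃⟩ := exists_choice_or hR hd₂ hc₃
  obtain ⟨d, hd, e⟩ := exists_choice_or hR hd₃ hc₄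
  refine ⟨d, hd, fun g hg ⟨t, ht⟩ => ?_⟩
  by_contra hcon
  have n₄ : ∀ c ∈ C, ¬ R g c := fun c hc h => hcon (e g (.inr (h₄ g ⟨c, hc, h⟩)))
  have n₃ : ¬ R g (c₃ g) := fun h => hcon (e g (.inl (e₃ g (.inr h))))
  have n₂ : ¬ R g (c₂ g) := fun h => hcon (e g (.inl (e₃ g (.inl (e₂ g (.inr h))))))
  have n₁ : ¬ R g (c₁ g) := fun h =>
    hcon (e g (.inl (e₃ g (.inl (e₂ g (.inl (e₁ g (.inr h))))))))
  have n₀ : ¬ R g (α g) := fun h =>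
    hcon (e g (.inl (e₃ g (.inl (e₂ g (.inl (e₁ g (.inl h))))))))
  have hRg : S.Dfn (R g) := hR.right g
  by_cases hfe : ∃ s, Fr (R g) s
  swap
  · push Not at hfe
    exact n₄ c₀ hc₀C ((iff_of_no_fr hRg Set.ordConnected_univ (fun c _ => hfe c) t trivial c₀
      trivial).1 ht)
  obtain ⟨a, ha⟩ := (hfr g).exists_isLeast hfe
  obtain ⟨hα1, hα2⟩ := hαs g ⟨a, ⟨ha.1, fun s hs => ha.2 hs⟩, fun s hs => ha.2 hs.1⟩
  obtain ⟨r, hαr, hr | hr⟩ := right_germ hRg (α g)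
  · obtain ⟨c, hcC, hac, hcb⟩ := hsep (α g) (.inl (.inl ⟨g, ⟨hg, r, hαr, hr⟩, n₁, rfl⟩))
    obtain ⟨x, hx1, hx2⟩ := exists_between hαr
    by_cases hnext : ∃ s, Fr (R g) s ∧ α g < s
    · obtain ⟨b, hb⟩ := ((hfr g).inter_of_left (Ioi (α g))).exists_isLeast hnext
      obtain ⟨⟨hβ1, hβ2⟩, hβ3⟩ := hβs g ⟨b, ⟨hb.1, fun s h1 h2 => hb.2 ⟨h1, h2⟩⟩,
        fun s hs => hb.2 hs.1⟩
      obtain ⟨y, hy1, hy2⟩ := exists_between (lt_min hαr hβ2)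
      have hall : ∀ s, α g < s → s < β g → R g s := fun s h1 h2 =>
        (iff_of_no_fr hRg (I := Ioo (α g) (β g)) Set.ordConnected_Ioo
          (fun s hs h => (hβ3 s h hs.1).not_gt hs.2) y ⟨hy1, hy2.trans_le (min_le_right _ _)⟩ s
          ⟨h1, h2⟩).1 (hr y hy1 (hy2.trans_le (min_le_left _ _)))
      exact n₄ c hcC (hall c hac (hcb (β g) (.inr ⟨g, ⟨hg, α g, hβ2, hall⟩, n₃, rfl⟩) hβ2))
    · push Not at hnext
      exact n₄ c hcC ((iff_of_no_fr hRg (I := Ioi (α g)) Set.ordConnected_Ioi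
        (fun s hs h => (hnext s h).not_gt hs) x hx1 c hac).1 (hr x hx1 hx2))
  · obtain ⟨l, hlα, hl⟩ := left_germ hRg (α g)
    obtain ⟨⟨y, hy1, hy2, hy3⟩, -⟩ := hα1 l r hlα hαr
    have hyα : y < α g := by
      rcases lt_trichotomy y (α g) with h | h | h
      · exact h
      · exact absurd (h ▸ hy3) n₀
      · exact absurd hy3 (hr y h hy2)
    have hl' := hl.resolve_right fun h => h y hy1 hyα hy3
    exact n₄ c₀ hc₀C ((iff_of_no_fr hRg (I := Iio (α g)) Set.ordConnected_Iio
      (fun s hs h => (hα2 s h).not_gt hs) y hyα c₀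
      (hc₀ _ (.inl (.inr ⟨g, ⟨hg, l, hlα, hl'⟩, n₂, rfl⟩)))).1 hy3)

/-- Definable choice for definable families indexed by a definable group. -/
theorem DefGroup.exists_choice (G : DefGroup S m) {n : ℕ}
    {R : (Fin m → N) → (Fin n → N) → Prop}
    (hR : S.Dfn (fun p : (Fin m → N) × (Fin n → N) => R p.1 p.2)) :
    ∃ c : (Fin m → N) → (Fin n → N), S.Dfn c ∧ ∀ g ∈ G.carrier, (∃ w, R g w) → R g (c g) := by
  induction n with
  | zero =>
    exact ⟨fun _ => Fin.elim0, by fun_prop, fun g _ ⟨w, hw⟩ =>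
      (Subsingleton.elim w Fin.elim0) ▸ hw⟩
  | succ n ih =>
    obtain ⟨c, hc, hcs⟩ := G.exists_choice_one (R := fun g t => ∃ w, R g (Fin.cons t w))
      (by fun_prop)
    obtain ⟨d, hd, hds⟩ := ih (R := fun g w => R g (Fin.cons (c g) w)) (by fun_prop)
    refine ⟨fun g => Fin.cons (c g) (d g), by fun_prop, fun g hg ⟨w, hw⟩ => ?_⟩
    exact hds g hg (hcs g hg ⟨w 0, Fin.tail w, by rwa [Fin.cons_self_tail]⟩)

end Choice

/-- every definable extension `1 → A → U →^j G → 1` has a definable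
section `s : G → U` with `j (s g) = g` for all `g ∈ G`. -/
theorem stmt_1 {N : Type u} [LinearOrder N] [DenselyOrdered N] [NoMinOrder N]
    [NoMaxOrder N] [Nonempty N] [TopologicalSpace N] [OrderTopology N]
    (S : Struc N) {mA mU mG : ℕ} (A : DefGroup S mA) (U : DefGroup S mU)
    (G : DefGroup S mG) (i : (Fin mA → N) → (Fin mU → N))
    (j : (Fin mU → N) → (Fin mG → N)) (hext : IsDefExtension A U G i j) :
    ∃ s : (Fin mG → N) → (Fin mU → N),
      S.DefFunOn G.carrier s ∧ (∀ g ∈ G.carrier, s g ∈ U.carrier) ∧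
      ∀ g ∈ G.carrier, j (s g) = g := by
  obtain ⟨-, ⟨-, hj, -⟩, -, hsurj, -⟩ := hext
  obtain ⟨s, hs, h⟩ := G.exists_choice (S := S) (R := fun g u => u ∈ U.carrier ∧ j u = g)
    ((dfn_graph_of_defFunOn hj).comp
      (f := fun p : (Fin mG → N) × (Fin mU → N) => (p.2, p.1)) (by fun_prop))
  have hs' : ∀ g ∈ G.carrier, s g ∈ U.carrier ∧ j (s g) = g := fun g hg => by
    rw [← hsurj] at hg
    exact h g (hsurj ▸ hg) hg
  exact ⟨s, defFunOn_of_dfn G.carrier_def hs, fun g hg => (hs' g hg).1, fun g hg => (hs' g hg).2⟩
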